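/- arXiv:1702.07172 — 5 statements merged into one kernel-verified Lean document; each statement's English description precedes it below -/
import Mathlib

section
/- For every integer d ≥ 2, every natural number n with n ≥ 2d², and every deterministic online coloring algorithm A on n-vertex graphs, there exists a chordal simple graph G on Fin n with chromatic number χ(G) = d such that the number of colors used by A on G is at least (d · log n)/32, where log is the base-2 logarithm. -/
/-!
The adversary builds a forest of cliques. Write `s = d / 2` and `g = ⌈s / 2⌉`. Call a set `R` of
vertices *active* if for each `v ∈ R` the neighbours of `v` arriving after `v` lie in `R` and number
fewer than `s`. By induction on `k`, the adversary can present at most `s * (2 ^ k - 1)` fresh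
vertices containing an active set that carries at least `k * g` colours
(`exists_active`). For the step from `k` to `k + 1`, play the strategy twice on disjoint vertex
ranges, getting active sets `R₁`, `R₂` with colour sets `C₁`, `C₂`. If `|C₁ ∪ C₂| ≥ (k + 1) * g`, then
`R₁ ∪ R₂` works. Otherwise fewer than `g` colours of `C₁` lie outside `C₂`; present a clique `K` of `s`
vertices, all joined to all of `R₂`. Its `s` colours avoid `C₂`, so `R₁ ∪ K` carries at least
`k * g + s - (g - 1) ≥ (k + 1) * g` colours.

Throughout, the later neighbours of each vertex form a clique of size less than `2 * s ≤ d`, i.e. the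
arrival order is a perfect elimination order. Hence the graph is chordal (`isChordal_of_good`: the
earliest vertex of a cycle has adjacent cycle-neighbours) and `d`-colourable (`colorable_of_good`:
greedy colouring in reverse order). A final disjoint clique of size `d` makes the chromatic number
exactly `d`. Taking `k = ⌊log₂ (n / d)⌋`, the hypothesis `2 * d ^ 2 ≤ n` gives `log₂ n ≤ 2 * k + 1`,
and the bound follows from `d ≤ 5 * g`.
-/

/-- The number of colors used by an online algorithm `A` on the graph `G`. -/
def colorsUsed {n : ℕ} (A : Fin n → SimpleGraph (Fin n) → ℕ)
    (G : SimpleGraph (Fin n)) : ℕ :=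
  (Finset.univ.image fun v => A v G).card

/-- `A` is a deterministic online coloring algorithm on `n`-vertex graphs:
its decision at time `t` depends only on the graph induced on the vertices `≤ t`,
and the produced coloring is always proper. -/
def IsOnlineAlg {n : ℕ} (A : Fin n → SimpleGraph (Fin n) → ℕ) : Prop :=
  (∀ (t : Fin n) (G G' : SimpleGraph (Fin n)),
      (∀ u v : Fin n, u ≤ t → v ≤ t → (G.Adj u v ↔ G'.Adj u v)) → A t G = A t G') ∧
  ∀ (G : SimpleGraph (Fin n)) (u v : Fin n), G.Adj u v → A u G ≠ A v G

/-- A closed walk has a chord: an edge of the graph joining two vertices of the walk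
that are not consecutive on it (i.e. the edge is not an edge of the walk). -/
def SimpleGraph.Walk.HasChord {V : Type*} {G : SimpleGraph V} {v : V}
    (p : G.Walk v v) : Prop :=
  ∃ x y, x ∈ p.support ∧ y ∈ p.support ∧ G.Adj x y ∧ s(x, y) ∉ p.edges

/-- A graph is chordal if every cycle of length at least 4 has a chord. -/
def SimpleGraph.IsChordal {V : Type*} (G : SimpleGraph V) : Prop :=
  ∀ ⦃v : V⦄ (p : G.Walk v v), p.IsCycle → 4 ≤ p.length → p.HasChord

namespace ChordalLowerBound

open Finset

variable {n : ℕ}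

open Classical in
/-- The neighbours of `v` that arrive after `v`. -/
noncomputable def later (G : SimpleGraph (Fin n)) (v : Fin n) : Finset (Fin n) :=
  univ.filter fun w => v < w ∧ G.Adj v w

lemma mem_later {G : SimpleGraph (Fin n)} {v w : Fin n} :
    w ∈ later G v ↔ v < w ∧ G.Adj v w := by
  simp [later]

/-- `G` lives on the first `t` vertices (the others are isolated), and the arrival order is a perfect
elimination order in which each vertex has fewer than `d` later neighbours. -/
structure Good (d t : ℕ) (G : SimpleGraph (Fin n)) : Prop where
  lt : ∀ u v, G.Adj u v → u.val < t
  clique : ∀ v a b, a ∈ later G v → b ∈ later G v → a ≠ b → G.Adj a b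
  card : ∀ v, (later G v).card < d

/-- The vertices of `R` have fewer than `s` later neighbours, all of them in `R`. Such an `R` may be
joined completely to a new clique of size `s` without destroying the perfect elimination order. -/
def Active (s : ℕ) (G : SimpleGraph (Fin n)) (R : Finset (Fin n)) : Prop :=
  ∀ v ∈ R, later G v ⊆ R ∧ (later G v).card < s

/-- The vertices arriving at times `t, …, t + m - 1`. -/
def block (n t m : ℕ) : Finset (Fin n) :=
  univ.filter fun v => t ≤ v.val ∧ v.val < t + m

lemma mem_block {t m : ℕ} {v : Fin n} : v ∈ block n t m ↔ t ≤ v.val ∧ v.val < t + m := by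
  simp [block]

lemma card_block {t m : ℕ} (h : t + m ≤ n) : (block n t m).card = m := by
  have : (block n t m).map Fin.valEmbedding = Finset.Ico t (t + m) := by
    ext x
    simp only [Finset.mem_map, mem_block, Fin.valEmbedding_apply, Finset.mem_Ico]
    constructor
    · rintro ⟨v, hv, rfl⟩; exact hv
    · intro hx; exact ⟨⟨x, by omega⟩, hx, rfl⟩
  rw [← Finset.card_map Fin.valEmbedding, this]; simp

/-- `G` together with a clique on the vertices `t, …, t + m - 1`, each joined to all of `R`. -/
def addClique (G : SimpleGraph (Fin n)) (t m : ℕ) (R : Finset (Fin n)) :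
    SimpleGraph (Fin n) where
  Adj u v := G.Adj u v ∨ (u ≠ v ∧ (u ∈ block n t m ∨ v ∈ block n t m) ∧
    (u ∈ block n t m ∨ u ∈ R) ∧ (v ∈ block n t m ∨ v ∈ R))
  symm := ⟨by
    rintro u v (h | ⟨h1, h2, h3, h4⟩)
    · exact Or.inl h.symm
    · exact Or.inr ⟨h1.symm, h2.symm, h4, h3⟩⟩
  loopless := ⟨by
    rintro v (h | h)
    · exact h.ne rfl
    · exact h.1 rfl⟩

lemma addClique_adj {G : SimpleGraph (Fin n)} {t m : ℕ} {R : Finset (Fin n)} {u v : Fin n} :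
    (addClique G t m R).Adj u v ↔ G.Adj u v ∨ (u ≠ v ∧ (u ∈ block n t m ∨ v ∈ block n t m) ∧
    (u ∈ block n t m ∨ u ∈ R) ∧ (v ∈ block n t m ∨ v ∈ R)) := Iff.rfl

section addClique

variable {d t m s : ℕ} {G : SimpleGraph (Fin n)} {R : Finset (Fin n)}

lemma later_addClique_of_mem (hRt : ∀ v ∈ R, v.val < t) {v : Fin n}
    (hv : v ∈ R) : later (addClique G t m R) v = later G v ∪ block n t m := by
  ext w
  have := hRt v hv
  have h1 : v ∉ block n t m := by rw [mem_block]; omega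
  simp only [mem_later, mem_union, addClique_adj]
  constructor
  · rintro ⟨h, h' | h'⟩
    · exact Or.inl ⟨h, h'⟩
    · exact Or.inr (h'.2.1.resolve_left h1)
  · rintro (h | h)
    · exact ⟨h.1, Or.inl h.2⟩
    · have h2 := mem_block.1 h
      have : v < w := by rw [Fin.lt_def]; omega
      exact ⟨this, Or.inr ⟨this.ne, Or.inr h, Or.inr hv, Or.inl h⟩⟩

lemma later_addClique_of_notMem {v : Fin n} (hv : v ∉ R) (hb : v ∉ block n t m) :
    later (addClique G t m R) v = later G v := by
  ext w
  simp only [mem_later, addClique_adj]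
  tauto

lemma later_addClique_block (hG : Good d t G) (hRt : ∀ v ∈ R, v.val < t) {v : Fin n}
    (hv : v ∈ block n t m) : later (addClique G t m R) v ⊆ (block n t m).erase v := by
  intro w
  have h1 := mem_block.1 hv
  simp only [mem_later, addClique_adj, mem_erase]
  rintro ⟨h, h' | h'⟩
  · have := hG.lt _ _ h'; omega
  · refine ⟨h.ne', h'.2.2.2.resolve_right fun hw => ?_⟩
    have := hRt w hw
    rw [Fin.lt_def] at h; omega

lemma card_later_addClique_block (hG : Good d t G) (hRt : ∀ v ∈ R, v.val < t) (hm : t + m ≤ n)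
    {v : Fin n} (hv : v ∈ block n t m) : (later (addClique G t m R) v).card < m := by
  refine (card_le_card (later_addClique_block hG hRt hv)).trans_lt ?_
  have := card_erase_lt_of_mem hv
  rwa [card_block hm] at this

lemma good_addClique (hG : Good d t G) (hRt : ∀ v ∈ R, v.val < t) (hR : Active s G R)
    (hm : t + m ≤ n) (hmd : m ≤ d) (hsm : R.Nonempty → s + m ≤ d) :
    Good d (t + m) (addClique G t m R) where
  lt u v h := by
    rcases addClique_adj.1 h with h | ⟨-, -, h | h, -⟩
    · have := hG.lt _ _ h; omega
    · exact (mem_block.1 h).2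
    · have := hRt _ h; omega
  clique v a b ha hb hab := by
    rw [addClique_adj]
    by_cases hv : v ∈ block n t m
    · have ha' := mem_of_mem_erase (later_addClique_block hG hRt hv ha)
      have hb' := mem_of_mem_erase (later_addClique_block hG hRt hv hb)
      exact Or.inr ⟨hab, Or.inl ha', Or.inl ha', Or.inl hb'⟩
    · by_cases hvR : v ∈ R
      · rw [later_addClique_of_mem hRt hvR, mem_union] at ha hb
        have hs := (hR v hvR).1
        rcases ha with ha | ha <;> rcases hb with hb | hb
        · exact Or.inl (hG.clique v a b ha hb hab)
        · exact Or.inr ⟨hab, Or.inr hb, Or.inr (hs ha), Or.inl hb⟩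
        · exact Or.inr ⟨hab, Or.inl ha, Or.inl ha, Or.inr (hs hb)⟩
        · exact Or.inr ⟨hab, Or.inl ha, Or.inl ha, Or.inl hb⟩
      · rw [later_addClique_of_notMem hvR hv] at ha hb
        exact Or.inl (hG.clique v a b ha hb hab)
  card v := by
    by_cases hv : v ∈ block n t m
    · exact (card_later_addClique_block hG hRt hm hv).trans_le hmd
    · by_cases hvR : v ∈ R
      · rw [later_addClique_of_mem hRt hvR]
        have h1 := card_union_le (later G v) (block n t m)
        rw [card_block hm] at h1
        have h2 := (hR v hvR).2
        have := hsm ⟨v, hvR⟩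
        omega
      · rw [later_addClique_of_notMem hvR hv]
        exact hG.card v

end addClique

/-- `G'` arises from `G` by presenting further vertices from time `t` on, none of which is joined to
the vertices before time `t`. -/
def Ext (t : ℕ) (G G' : SimpleGraph (Fin n)) : Prop :=
  ∀ u v : Fin n, u.val < t → (G.Adj u v ↔ G'.Adj u v)

lemma Ext.later_eq {t : ℕ} {G G' : SimpleGraph (Fin n)} (h : Ext t G G') {v : Fin n}
    (hv : v.val < t) : later G' v = later G v := by
  ext w
  simp only [mem_later, h v w hv]

lemma Ext.image_eq {A : Fin n → SimpleGraph (Fin n) → ℕ} (hA : IsOnlineAlg A) {t : ℕ}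
    {G G' : SimpleGraph (Fin n)} (h : Ext t G G') {R : Finset (Fin n)}
    (hR : ∀ v ∈ R, v.val < t) : (R.image fun v => A v G') = R.image fun v => A v G := by
  refine image_congr fun v hv => ?_
  refine (hA.1 v G G' fun u w hu _ => h u w ?_).symm
  have := hR v hv
  rw [Fin.le_def] at hu
  omega

lemma Ext.active {s t : ℕ} {G G' : SimpleGraph (Fin n)} (h : Ext t G G') {R : Finset (Fin n)}
    (hRt : ∀ v ∈ R, v.val < t) (hR : Active s G R) : Active s G' R := by
  intro v hv
  rw [h.later_eq (hRt v hv)]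
  exact hR v hv

lemma Ext.trans {t t' : ℕ} {G G' G'' : SimpleGraph (Fin n)} (h : Ext t G G') (h' : Ext t' G' G'')
    (htt : t ≤ t') : Ext t G G'' :=
  fun u v hu => (h u v hu).trans (h' u v (by omega))

lemma ext_addClique {t t' m : ℕ} {G : SimpleGraph (Fin n)} {R : Finset (Fin n)} (htt : t ≤ t')
    (hR : ∀ v ∈ R, t ≤ v.val) : Ext t G (addClique G t' m R) := by
  intro u v hu
  rw [addClique_adj]
  refine ⟨Or.inl, fun h => h.resolve_right fun h' => ?_⟩
  rcases h'.2.2.1 with h | h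
  · have := mem_block.1 h; omega
  · have := hR _ h; omega

/-- The adversary's strategy: `s * (2 ^ k - 1)` fresh vertices suffice to force `k * ⌈s / 2⌉`
colours on an active set of fresh vertices. -/
lemma exists_active {A : Fin n → SimpleGraph (Fin n) → ℕ} (hA : IsOnlineAlg A) {d s : ℕ}
    (hsd : 2 * s ≤ d) (k : ℕ) : ∀ (t : ℕ) (G : SimpleGraph (Fin n)), Good d t G →
    t + s * (2 ^ k - 1) ≤ n → ∃ (t' : ℕ) (G' : SimpleGraph (Fin n)) (R : Finset (Fin n)),
      t ≤ t' ∧ t' ≤ t + s * (2 ^ k - 1) ∧ Good d t' G' ∧ Ext t G G' ∧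
      (∀ v ∈ R, t ≤ v.val ∧ v.val < t') ∧ Active s G' R ∧
      k * ((s + 1) / 2) ≤ (R.image fun v => A v G').card := by
  induction k with
  | zero =>
    intro t G hG _
    exact ⟨t, G, ∅, le_rfl, by simp, hG, fun _ _ _ => Iff.rfl, by simp, by simp [Active], by simp⟩
  | succ k ih =>
    intro t G hG hn
    have hpow : s * (2 ^ (k + 1) - 1) = s * (2 ^ k - 1) + s * (2 ^ k - 1) + s := by
      have : 2 ^ (k + 1) - 1 = (2 ^ k - 1) + (2 ^ k - 1) + 1 := by
        have := Nat.one_le_two_pow (n := k)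
        rw [pow_succ]; omega
      rw [this]; ring
    rw [hpow] at hn ⊢
    obtain ⟨t₁, G₁, R₁, ht₁, ht₁', hG₁, hE₁, hR₁, hA₁, hC₁⟩ := ih t G hG (by omega)
    obtain ⟨t₂, G₂, R₂, ht₂, ht₂', hG₂, hE₂, hR₂, hA₂, hC₂⟩ := ih t₁ G₁ hG₁ (by omega)
    have hR₁lt : ∀ v ∈ R₁, v.val < t₁ := fun v hv => (hR₁ v hv).2
    have hR₂lt : ∀ v ∈ R₂, v.val < t₂ := fun v hv => (hR₂ v hv).2
    set g := (s + 1) / 2 with hg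
    rw [← hE₂.image_eq hA hR₁lt] at hC₁
    set C₁ := R₁.image fun v => A v G₂ with hC₁def
    set C₂ := R₂.image fun v => A v G₂ with hC₂def
    have hkg : (k + 1) * g = k * g + g := by ring
    by_cases hU : (k + 1) * g ≤ (C₁ ∪ C₂).card
    · refine ⟨t₂, G₂, R₁ ∪ R₂, by omega, by omega, hG₂, hE₁.trans hE₂ ht₁, ?_, ?_, ?_⟩
      · intro v hv
        rcases mem_union.1 hv with h | h
        · have := hR₁ v h; omega
        · have := hR₂ v h; omega
      · intro v hv
        rcases mem_union.1 hv with h | h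
        · have := hE₂.active hR₁lt hA₁ v h
          exact ⟨this.1.trans subset_union_left, this.2⟩
        · have := hA₂ v h
          exact ⟨this.1.trans subset_union_right, this.2⟩
      · rwa [image_union]
    · have hm : t₂ + s ≤ n := by omega
      have hE₃ : Ext t₁ G₂ (addClique G₂ t₂ s R₂) := ext_addClique ht₂ fun v hv => (hR₂ v hv).1
      -- On vertices before `t₂` the algorithm cannot distinguish the two graphs.
      have hC₂' : C₂ = R₂.image fun v => A v (addClique G₂ t₂ s R₂) := by
        refine image_congr fun v hv => hA.1 v _ _ fun a b ha hb => ?_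
        rw [addClique_adj]
        refine ⟨Or.inl, fun h => h.resolve_right fun h' => ?_⟩
        have hv' := hR₂lt v hv
        rw [Fin.le_def] at ha hb
        rcases h'.2.1 with h | h <;> have := mem_block.1 h <;> omega
      set G₃ := addClique G₂ t₂ s R₂ with hG₃def
      set K := block n t₂ s with hK
      have hE₁₃ : Ext t₁ G₁ G₃ := hE₂.trans hE₃ le_rfl
      refine ⟨t₂ + s, G₃, R₁ ∪ K, by omega, by omega,
        good_addClique hG₂ hR₂lt hA₂ hm (by omega) (fun _ => by omega),
        hE₁.trans hE₁₃ ht₁, ?_, ?_, ?_⟩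
      · intro v hv
        rcases mem_union.1 hv with h | h
        · have := hR₁ v h; omega
        · have := mem_block.1 h; omega
      · intro v hv
        rcases mem_union.1 hv with h | h
        · have := hE₁₃.active hR₁lt hA₁ v h
          exact ⟨this.1.trans subset_union_left, this.2⟩
        · exact ⟨((later_addClique_block hG₂ hR₂lt h).trans (erase_subset _ _)).trans
            subset_union_right, card_later_addClique_block hG₂ hR₂lt hm h⟩
      · rw [image_union, hE₃.image_eq hA hR₁lt, ← hC₁def]
        set CK := K.image fun v => A v G₃ with hCK
        have hcardK : CK.card = s := by
          rw [hCK, card_image_of_injOn, card_block hm]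
          intro u hu v hv huv
          by_contra hne
          exact hA.2 G₃ u v (addClique_adj.2 (Or.inr ⟨hne, Or.inl hu, Or.inl hu, Or.inl hv⟩)) huv
        have hdisj : Disjoint C₂ CK := by
          rw [hC₂', hCK, disjoint_left]
          simp only [mem_image]
          rintro _ ⟨u, hu, rfl⟩ ⟨v, hv, huv⟩
          have hne : v ≠ u := by
            rintro rfl
            have := mem_block.1 hv
            have := hR₂lt _ hu
            omega
          exact hA.2 G₃ v u (addClique_adj.2 (Or.inr ⟨hne, Or.inl hv, Or.inl hv, Or.inr hu⟩)) huv
        have h1 := card_union_add_card_inter C₁ CK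
        have h2 : (C₁ ∩ CK).card ≤ (C₁ \ C₂).card := by
          refine card_le_card fun x hx => ?_
          rw [mem_inter] at hx
          exact mem_sdiff.2 ⟨hx.1, fun h => disjoint_left.1 hdisj h hx.2⟩
        have h3 : (C₁ \ C₂).card + C₂.card = (C₁ ∪ C₂).card := card_sdiff_add_card C₁ C₂
        omega

/-- The earliest vertex of a cycle has its two neighbours on the cycle among its later neighbours, and
the edge between these is a chord as soon as the cycle has length at least four. -/
lemma isChordal_of_good {d t : ℕ} {G : SimpleGraph (Fin n)} (hG : Good d t G) : G.IsChordal := by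
  intro v₀ p₀ hp₀ hlen₀
  obtain ⟨v, hv, hmin⟩ := p₀.support.toFinset.exists_min_image id ⟨v₀, by simp⟩
  rw [List.mem_toFinset] at hv
  have hmin' : ∀ w ∈ p₀.support, v ≤ w := fun w hw => hmin w (by simpa using hw)
  set p := p₀.rotate v hv with hp
  have hpc : p.IsCycle := hp₀.rotate hv
  have hsup : ∀ w, w ∈ p.support → w ∈ p₀.support := fun w hw => by
    simpa [hp] using hw
  have hlen : 4 ≤ p.length := by
    simpa [hp] using hlen₀
  have hedge : ∀ e, e ∈ p₀.edges → e ∈ p.edges := fun e he =>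
    (p₀.rotate_edges v hv).mem_iff.2 he
  have hadj1 : G.Adj v (p.getVert 1) := by
    have := p.adj_getVert_succ (i := 0) (by omega)
    simpa using this
  have hadj2 : G.Adj v (p.getVert (p.length - 1)) := by
    have := p.adj_getVert_succ (i := p.length - 1) (by omega)
    rw [Nat.sub_add_cancel (by omega), p.getVert_length] at this
    exact this.symm
  have hm1 : p.getVert 1 ∈ p₀.support := hsup _ (p.getVert_mem_support 1)
  have hm2 : p.getVert (p.length - 1) ∈ p₀.support := hsup _ (p.getVert_mem_support _)
  have hinj := hpc.getVert_injOn
  have hinj' : ∀ i j, 1 ≤ i → i ≤ p.length → 1 ≤ j → j ≤ p.length →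
      p.getVert i = p.getVert j → i = j := fun i j h1 h2 h3 h4 h =>
    hinj ⟨h1, h2⟩ ⟨h3, h4⟩ h
  have hne : p.getVert 1 ≠ p.getVert (p.length - 1) := fun h => by
    have := hinj' _ _ (by omega) (by omega) (by omega) (by omega) h
    omega
  refine ⟨p.getVert 1, p.getVert (p.length - 1), hm1, hm2, ?_, ?_⟩
  · exact hG.clique v _ _
      (mem_later.2 ⟨lt_of_le_of_ne (hmin' _ hm1) hadj1.ne, hadj1⟩)
      (mem_later.2 ⟨lt_of_le_of_ne (hmin' _ hm2) hadj2.ne, hadj2⟩) hne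
  · intro he
    obtain ⟨i, hi, hie⟩ : ∃ i, i < p.length ∧
        s(p.getVert i, p.getVert (i + 1)) = s(p.getVert 1, p.getVert (p.length - 1)) := by
      exact p.mk_mem_edges_iff_exists.1 (hedge _ he)
    have h0 : p.getVert 0 = v := p.getVert_zero
    have hl : p.getVert p.length = v := p.getVert_length
    rcases Sym2.eq_iff.1 hie with ⟨h1, h2⟩ | ⟨h1, h2⟩
    · rcases Nat.eq_zero_or_pos i with rfl | hpos
      · exact hadj1.ne (h0.symm.trans h1)
      · have := hinj' _ _ hpos (by omega) (by omega) (by omega) h1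
        have := hinj' _ _ (by omega) (by omega) (by omega) (by omega) h2
        omega
    · rcases Nat.eq_zero_or_pos i with rfl | hpos
      · exact hadj2.ne (h0.symm.trans h1)
      · have := hinj' _ _ hpos (by omega) (by omega) (by omega) h1
        have := hinj' _ _ (by omega) (by omega) (by omega) (by omega) h2
        omega

/-- Greedy colouring in reverse order of arrival. -/
lemma colorable_of_good {d t : ℕ} {G : SimpleGraph (Fin n)} (hG : Good d t G) (hd : 0 < d) :
    G.Colorable d := by
  have key : ∀ m, ∃ c : Fin n → Fin d, ∀ u v : Fin n, n ≤ u.val + m → n ≤ v.val + m →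
      G.Adj u v → c u ≠ c v := by
    intro m
    induction m with
    | zero => exact ⟨fun _ => ⟨0, hd⟩, fun u _ hu => by have := u.isLt; omega⟩
    | succ m ih =>
      obtain ⟨c, hc⟩ := ih
      by_cases hm : m < n
      · set x : Fin n := ⟨n - 1 - m, by omega⟩ with hx
        obtain ⟨y, hy⟩ : ∃ y, y ∉ (later G x).image c := by
          by_contra! h
          have h1 : (later G x).image c = univ := eq_univ_iff_forall.2 h
          have h2 := (card_image_le (s := later G x) (f := c)).trans_lt (hG.card x)
          rw [h1] at h2
          simp at h2
        have hlat : ∀ w : Fin n, n ≤ w.val + (m + 1) → G.Adj x w → c w ≠ y := by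
          rintro w hw hxw rfl
          refine hy (mem_image_of_mem c (mem_later.2 ⟨lt_of_le_of_ne ?_ hxw.ne, hxw⟩))
          rw [Fin.le_def]
          change n - 1 - m ≤ w.val
          omega
        have hlt : ∀ w : Fin n, n ≤ w.val + (m + 1) → w ≠ x → n ≤ w.val + m := by
          intro w hw hwx
          by_contra h
          refine hwx (Fin.ext ?_)
          change w.val = n - 1 - m
          omega
        refine ⟨Function.update c x y, fun u v hu hv huv => ?_⟩
        by_cases hux : u = x
        · subst hux
          rw [Function.update_self, Function.update_of_ne huv.ne']
          exact (hlat v hv huv).symm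
        · by_cases hvx : v = x
          · subst hvx
            rw [Function.update_self, Function.update_of_ne hux]
            exact hlat u hu huv.symm
          · rw [Function.update_of_ne hux, Function.update_of_ne hvx]
            exact hc u v (hlt u hu hux) (hlt v hv hvx) huv
      · exact ⟨c, fun u v _ _ => hc u v (by omega) (by omega)⟩
  obtain ⟨c, hc⟩ := key n
  exact ⟨SimpleGraph.Coloring.mk c fun {u v} h => hc u v (by omega) (by omega) h⟩

lemma good_bot {d : ℕ} (hd : 0 < d) : Good d 0 (⊥ : SimpleGraph (Fin n)) where
  lt u v h := by simp at h
  clique v a b ha := by simp [mem_later] at ha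
  card v := by
    have : later (⊥ : SimpleGraph (Fin n)) v = ∅ := by ext w; simp [mem_later]
    simpa [this] using hd

end ChordalLowerBound

open ChordalLowerBound in
theorem det_lower_bound_chordal (d : ℕ) (hd : 2 ≤ d) (n : ℕ) (hn : 2 * d ^ 2 ≤ n)
    (A : Fin n → SimpleGraph (Fin n) → ℕ) (hA : IsOnlineAlg A) :
    ∃ G : SimpleGraph (Fin n), G.IsChordal ∧ G.chromaticNumber = d ∧
      (d : ℝ) * Real.logb 2 n / 32 ≤ (colorsUsed A G : ℝ) := by
  obtain ⟨s, hs⟩ : ∃ s, s = d / 2 := ⟨_, rfl⟩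
  obtain ⟨k, hk⟩ : ∃ k, k = Nat.log 2 (n / d) := ⟨_, rfl⟩
  have hnd : 4 ≤ n / d := by
    rw [Nat.le_div_iff_mul_le (by omega)]; nlinarith
  have hk1 : 1 ≤ k := by
    rw [hk]; exact Nat.log_pos (by norm_num) (by omega)
  have hle : 2 ^ k * d ≤ n := by
    rw [← Nat.le_div_iff_mul_le (by omega), hk]
    exact Nat.pow_log_le_self 2 (by omega)
  have hgt : n < 2 ^ (k + 1) * d := by
    rw [← Nat.div_lt_iff_lt_mul (by omega), hk]
    exact Nat.lt_pow_succ_log_self (by norm_num) _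
  have h2k : 2 ≤ 2 ^ k := by
    calc 2 = 2 ^ 1 := rfl
      _ ≤ 2 ^ k := Nat.pow_le_pow_right (by norm_num) hk1
  have hroom : s * (2 ^ k - 1) + d ≤ n := by
    obtain ⟨q, hq⟩ : ∃ q, 2 ^ k = q + 2 := ⟨2 ^ k - 2, by omega⟩
    rw [hq] at hle ⊢
    have : q + 2 - 1 = q + 1 := by omega
    rw [this]
    have h2s : 2 * s ≤ d := by omega
    nlinarith
  have hlog : n ≤ 2 ^ (2 * k + 1) := by
    have h1 : n * (2 * d ^ 2) ≤ (2 ^ (k + 1) * d) * (2 ^ (k + 1) * d) :=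
      (Nat.mul_le_mul_left n hn).trans (Nat.mul_le_mul hgt.le hgt.le)
    have h2 : (2 ^ (k + 1) * d) * (2 ^ (k + 1) * d) = 2 ^ (2 * k + 1) * (2 * d ^ 2) := by ring
    rw [h2] at h1
    exact Nat.le_of_mul_le_mul_right h1 (by positivity)
  obtain ⟨t, G, R, -, ht, hG, -, hRt, hR, hC⟩ :=
    exists_active (s := s) hA (by omega) k 0 ⊥ (good_bot (d := d) (by omega)) (by omega)
  have htd : t + d ≤ n := by omega
  have hG' : Good d (t + d) (addClique G t d ∅) :=
    good_addClique (s := s) hG (by simp) (by simp [Active]) htd le_rfl (by simp)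
  have hE : Ext t G (addClique G t d ∅) := ext_addClique le_rfl (by simp)
  refine ⟨addClique G t d ∅, isChordal_of_good hG', le_antisymm ?_ ?_, ?_⟩
  · exact (colorable_of_good hG' (by omega)).chromaticNumber_le
  · have hcl : (addClique G t d ∅).IsClique (block n t d : Set (Fin n)) := by
      intro u hu v hv huv
      exact addClique_adj.2 (Or.inr ⟨huv, Or.inl hu, Or.inl hu, Or.inl hv⟩)
    have := hcl.card_le_chromaticNumber
    rwa [card_block htd] at this
  · have hcol : k * ((s + 1) / 2) ≤ colorsUsed A (addClique G t d ∅) := by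
      rw [← hE.image_eq hA fun v hv => (hRt v hv).2] at hC
      exact hC.trans (Finset.card_le_card (Finset.image_subset_image (Finset.subset_univ _)))
    have hlogR : Real.logb 2 n ≤ 2 * k + 1 := by
      have hpos : (0 : ℝ) < n := by exact_mod_cast (by omega : 0 < n)
      rw [Real.logb_le_iff_le_rpow (by norm_num) hpos]
      have : (n : ℝ) ≤ (2 : ℝ) ^ (2 * k + 1) := by exact_mod_cast hlog
      refine this.trans (le_of_eq ?_)
      rw [← Real.rpow_natCast]; push_cast; rfl
    have hd5 : (d : ℝ) ≤ 5 * ((s + 1) / 2 : ℕ) := by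
      exact_mod_cast (by omega : d ≤ 5 * ((s + 1) / 2))
    have hcolR : (k : ℝ) * ((s + 1) / 2 : ℕ) ≤ colorsUsed A (addClique G t d ∅) := by
      exact_mod_cast hcol
    have hk1R : (1 : ℝ) ≤ k := by exact_mod_cast hk1
    have hd0 : (0 : ℝ) ≤ d := by positivity
    refine le_trans ?_ hcolR
    have h1 : (d : ℝ) * Real.logb 2 n ≤ d * (3 * k) :=
      mul_le_mul_of_nonneg_left (by linarith) hd0
    have h2 : (d : ℝ) * (3 * k) ≤ (5 * ((s + 1) / 2 : ℕ)) * (3 * k) :=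
      mul_le_mul_of_nonneg_right hd5 (by positivity)
    have h3 : (0 : ℝ) ≤ (k : ℝ) * ((s + 1) / 2 : ℕ) := by positivity
    linarith
end

section
/- For every integer d ≥ 2, every integer k ≥ 1, and every deterministic online coloring algorithm A on N-vertex graphs, where N = d·2^k, there exists a chordal simple graph G on Fin N with chromatic number χ(G) = d such that the number of colors used by A on G is at least (d−1)·k/4. -/
/-! ### A criterion for chordality -/

/-- If, in some linear order, the later neighbours of every vertex are pairwise adjacent, then the
graph is chordal: the two cycle neighbours of the least vertex of a cycle span a chord. -/
lemma isChordal_of_later_nbrs {V : Type*} [LinearOrder V] (G : SimpleGraph V)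
    (H : ∀ u v w : V, u < v → u < w → v ≠ w → G.Adj u v → G.Adj u w → G.Adj v w) :
    G.IsChordal := by
  intro v p hp hlen
  obtain ⟨u, hu, hmin⟩ := Finset.exists_min_image p.support.toFinset id
    ⟨v, by simp⟩
  rw [List.mem_toFinset] at hu
  have hmin' : ∀ x ∈ p.support, u ≤ x := fun x hx => hmin x (by simpa using hx)
  have hq := hp.rotate hu
  have hl : (p.rotate u hu).length = p.length := SimpleGraph.Walk.length_rotate _ _ _
  have hs : ∀ x, x ∈ (p.rotate u hu).support → x ∈ p.support := fun x hx =>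
    (SimpleGraph.Walk.mem_support_rotate_iff p u hu).1 hx
  have he : ∀ e, e ∈ p.edges → e ∈ (p.rotate u hu).edges := fun e h =>
    (SimpleGraph.Walk.rotate_edges p u hu).mem_iff.2 h
  generalize p.rotate u hu = q at hq hl hs he
  have a1 : G.Adj u q.snd := q.adj_snd hq.not_nil
  have a2 : G.Adj u q.penultimate := (q.adj_penultimate hq.not_nil).symm
  have m1 := hs _ (q.getVert_mem_support 1)
  have m2 := hs _ (q.getVert_mem_support (q.length - 1))
  refine ⟨q.snd, q.penultimate, m1, m2, ?_, ?_⟩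
  · exact H u _ _ (lt_of_le_of_ne (hmin' _ m1) a1.ne) (lt_of_le_of_ne (hmin' _ m2) a2.ne)
      hq.snd_ne_penultimate a1 a2
  · intro h
    obtain ⟨i, hi, h⟩ := (q.mk_mem_edges_iff_exists).1 (he _ h)
    have inj : ∀ a b, 1 ≤ a → a ≤ q.length → 1 ≤ b → b ≤ q.length →
        q.getVert a = q.getVert b → a = b :=
      fun a b h1 h2 h3 h4 e => hq.getVert_injOn ⟨h1, h2⟩ ⟨h3, h4⟩ e
    rcases Sym2.eq_iff.1 h with ⟨h1, h2⟩ | ⟨h1, h2⟩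
    · have := inj _ _ (by omega) (by omega) (by omega) (by omega) h2
      have := inj _ _ (by omega) (by omega) (by omega) (by omega) h1
      omega
    · have h3 := inj _ _ (by omega) (by omega) (by omega) (by omega) h2
      obtain rfl : i = 0 := by omega
      -- index `0` lies outside the range of injectivity, but `0` and `q.length` are the same vertex
      have h4 : q.getVert q.length = q.getVert (q.length - 1) :=
        q.getVert_length.trans (q.getVert_zero.symm.trans h1)
      have := inj _ _ (by omega) (by omega) (by omega) (by omega) h4
      omega

/-! ### Graphs given by forests of blocks -/

/-- Adjacency of `u < v`: vertices from `L` on form a clique. Below `L`, the vertices in block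
`b = [b * h, (b + 1) * h)` are joined to each other and to the vertices of block `par b`.
A value `par b ≤ b` means that block `b` has no parent. -/
def BlockRel (L h : ℕ) (par : ℕ → ℕ) (u v : ℕ) : Prop :=
  u < v ∧ (L ≤ u ∨ (v < L ∧ (v / h = u / h ∨ v / h = par (u / h))))

/-- The graph on `Fin N` presented by the adversary for the parent function `par`. -/
def blockGraph (N L h : ℕ) (par : ℕ → ℕ) : SimpleGraph (Fin N) where
  Adj u v := BlockRel L h par u v ∨ BlockRel L h par v u
  symm := ⟨fun _ _ h => h.symm⟩
  loopless := ⟨fun u h => by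
    rcases h with h | h <;> exact lt_irrefl _ h.1⟩

lemma blockGraph_adj_of_lt {N L h : ℕ} {par : ℕ → ℕ} {u v : Fin N} (huv : u < v) :
    (blockGraph N L h par).Adj u v ↔ BlockRel L h par u v := by
  constructor
  · rintro (H | H)
    · exact H
    · exact absurd H.1 (by have : u.val < v.val := huv; omega)
  · exact Or.inl

lemma blockGraph_isChordal (N L h : ℕ) (par : ℕ → ℕ) : (blockGraph N L h par).IsChordal := by
  -- two vertices `v < w` of the block of `u` and of its parent block are adjacent
  have key : ∀ u v w : ℕ, u < v → v < w → BlockRel L h par u v → BlockRel L h par u w →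
      BlockRel L h par v w := by
    rintro u v w huv hvw ⟨-, h1⟩ ⟨-, h2⟩
    refine ⟨hvw, ?_⟩
    have hd1 : u / h ≤ v / h := Nat.div_le_div_right huv.le
    have hd2 : v / h ≤ w / h := Nat.div_le_div_right hvw.le
    rcases h1 with h1 | ⟨h1, h1'⟩
    · left; omega
    · rcases h2 with h2 | ⟨h2, h2'⟩
      · omega
      · right
        refine ⟨h2, ?_⟩
        rcases h1' with e1 | e1 <;> rcases h2' with e2 | e2
        · left; omega
        · right; rw [e1, e2]
        · left; omega
        · left; omega
  apply isChordal_of_later_nbrs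
  intro u v w huv huw hne h1 h2
  rw [blockGraph_adj_of_lt huv] at h1
  rw [blockGraph_adj_of_lt huw] at h2
  rcases lt_or_gt_of_ne hne with hlt | hlt
  · exact (blockGraph_adj_of_lt hlt).2 (key u v w huv hlt h1 h2)
  · exact ((blockGraph_adj_of_lt hlt).2 (key u w v huw hlt h2 h1)).symm

/-- `par` is a forest on the first `s` blocks: all proper parents point forward and lie below `s`.
The value `0` encodes the absence of a parent. -/
def ForestBelow (s : ℕ) (par : ℕ → ℕ) : Prop := ∀ b, par b ≠ 0 → b < par b ∧ par b < s

/-- A block forest has a proper 2-colouring. -/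
lemma exists_parity {s : ℕ} {par : ℕ → ℕ} (hp : ForestBelow s par) :
    ∃ f : ℕ → ℕ, (∀ b, f b < 2) ∧ ∀ b, b < par b → f b ≠ f (par b) := by
  suffices H : ∀ n, ∃ f : ℕ → ℕ, (∀ b, f b < 2) ∧
      ∀ b, s ≤ b + n → b < par b → f b ≠ f (par b) by
    obtain ⟨f, h1, h2⟩ := H s
    exact ⟨f, h1, fun b => h2 b (by omega)⟩
  intro n
  induction n with
  | zero =>
    refine ⟨fun _ => 0, by simp, fun b hb hlt => ?_⟩
    have := (hp b (by omega)).2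
    omega
  | succ n ih =>
    obtain ⟨f, h1, h2⟩ := ih
    refine ⟨fun b => if s ≤ b + n then f b else 1 - f (par b), fun b => ?_, fun b hb hlt => ?_⟩
    · have := h1 b
      dsimp only
      split_ifs <;> omega
    · have hpb : s ≤ par b + n := by omega
      dsimp only
      rw [if_pos hpb]
      have := h1 (par b)
      split_ifs with hc
      · exact h2 b hc hlt
      · omega

lemma blockGraph_colorable {N L h d s : ℕ} {par : ℕ → ℕ} (hh : 0 < h) (hd : 2 * h ≤ d)
    (hN : N ≤ L + d) (hp : ForestBelow s par) : (blockGraph N L h par).Colorable d := by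
  obtain ⟨f, hf, hfp⟩ := exists_parity hp
  let c : ℕ → ℕ := fun v => if L ≤ v then v - L else f (v / h) * h + v % h
  have hc : ∀ v, v < N → c v < d := by
    intro v hv
    dsimp only [c]
    split_ifs
    · omega
    · have h1 := hf (v / h)
      have h2 := Nat.mod_lt v hh
      have : f (v / h) * h ≤ 1 * h := Nat.mul_le_mul_right _ (by omega)
      omega
  have key : ∀ u v, BlockRel L h par u v → c u ≠ c v := by
    rintro u v ⟨huv, H⟩
    dsimp only [c]
    rcases H with H | ⟨H, H'⟩
    · rw [if_pos H, if_pos (by omega)]; omega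
    · rw [if_neg (by omega), if_neg (by omega)]
      intro e
      have e1 : f (u / h) = f (v / h) := by
        have := congrArg (· / h) e
        simpa [Nat.mul_comm _ h, Nat.mul_add_div hh, Nat.div_eq_of_lt (Nat.mod_lt _ hh)] using this
      rw [e1] at e
      have e2 : u % h = v % h := by omega
      have hne : u / h ≠ v / h := by
        intro e3
        have h1 := Nat.div_add_mod u h
        have h2 := Nat.div_add_mod v h
        rw [e3, e2] at h1
        omega
      have hle : u / h ≤ v / h := Nat.div_le_div_right huv.le
      rcases H' with H' | H'
      · exact hne H'.symm
      · exact hfp (u / h) (by omega) (by rw [e1, H'])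
  refine ⟨SimpleGraph.Coloring.mk (fun v => (⟨c v, hc v v.2⟩ : Fin d)) ?_⟩
  rintro u v (H | H) e
  · exact key _ _ H (congrArg Fin.val e)
  · exact key _ _ H (congrArg Fin.val e).symm

lemma blockGraph_chromaticNumber {N L h d s : ℕ} {par : ℕ → ℕ} (hh : 0 < h) (hd : 2 * h ≤ d)
    (hN : N = L + d) (hp : ForestBelow s par) : (blockGraph N L h par).chromaticNumber = d := by
  apply le_antisymm (blockGraph_colorable hh hd hN.le hp).chromaticNumber_le
  have hcl : (blockGraph N L h par).IsClique
      ((Finset.univ.image fun j : Fin d => (⟨L + j, by omega⟩ : Fin N) : Finset (Fin N)) :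
        Set (Fin N)) := by
    intro u hu v hv hne
    simp only [Finset.coe_image, Finset.coe_univ, Set.image_univ, Set.mem_range] at hu hv
    obtain ⟨i, rfl⟩ := hu
    obtain ⟨j, rfl⟩ := hv
    have hij : i.val ≠ j.val := fun e => hne (by simp [e])
    rcases lt_or_gt_of_ne hij with hlt | hlt
    · exact Or.inl ⟨by simpa using hlt, Or.inl (by simp)⟩
    · exact Or.inr ⟨by simpa using hlt, Or.inl (by simp)⟩
  have := hcl.card_le_chromaticNumber
  rwa [Finset.card_image_of_injective, Finset.card_univ, Fintype.card_fin] at this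
  intro i j e
  have := congrArg Fin.val e
  exact Fin.ext (by simpa using this)

/-! ### Colours of blocks -/

/-- The set of colours the algorithm uses on the blocks with index in `X`. -/
def blockColors {N : ℕ} (A : Fin N → SimpleGraph (Fin N) → ℕ) (L h : ℕ) (par : ℕ → ℕ)
    (X : Finset ℕ) : Finset ℕ :=
  (Finset.univ.filter fun v : Fin N => v.val / h ∈ X).image fun v => A v (blockGraph N L h par)

/-- The colours on blocks below `s` depend only on the parent relation between blocks
below `s`. -/
lemma blockColors_congr {N : ℕ} {A : Fin N → SimpleGraph (Fin N) → ℕ} (hA : IsOnlineAlg A)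
    {L h s : ℕ} {par par' : ℕ → ℕ} {X : Finset ℕ}
    (hX : ∀ b ∈ X, b < s)
    (hpp : ∀ b c, b < c → c < s → (c = par b ↔ c = par' b)) :
    blockColors A L h par X = blockColors A L h par' X := by
  apply Finset.image_congr
  intro t ht
  have ht' : t.val / h < s := hX _ (by simpa using ht)
  apply hA.1
  have key : ∀ u v : Fin N, v ≤ t → (BlockRel L h par u v ↔ BlockRel L h par' u v) := by
    intro u v hv
    apply and_congr_right
    intro huv
    have h1 : u.val / h ≤ v.val / h := Nat.div_le_div_right huv.le
    have h2 : v.val / h ≤ t.val / h := Nat.div_le_div_right hv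
    apply or_congr_right
    apply and_congr_right
    intro _
    rcases h1.eq_or_lt with e | hlt
    · simp [e]
    · apply or_congr_right
      exact hpp _ _ hlt (by omega)
  intro u v hu hv
  exact or_congr (key u v hv) (key v u hu)

lemma blockColors_union {N : ℕ} (A : Fin N → SimpleGraph (Fin N) → ℕ) (L h : ℕ) (par : ℕ → ℕ)
    (X Y : Finset ℕ) :
    blockColors A L h par (X ∪ Y) = blockColors A L h par X ∪ blockColors A L h par Y := by
  simp only [blockColors, ← Finset.image_union, ← Finset.filter_or, Finset.mem_union]

/-- A block is a clique, so the algorithm uses at least `h` colours on it. -/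
lemma le_card_blockColors_singleton {N : ℕ} {A : Fin N → SimpleGraph (Fin N) → ℕ}
    (hA : IsOnlineAlg A) {L h s : ℕ} (hh : 0 < h) (par : ℕ → ℕ) (hL : h * (s + 1) ≤ L)
    (hLN : L ≤ N) : h ≤ (blockColors A L h par {s}).card := by
  have hb : ∀ j : Fin h, h * s + j < L := fun j => by
    have := j.2
    rw [Nat.mul_add] at hL
    omega
  have hdiv : ∀ j : Fin h, (h * s + j) / h = s := fun j => by
    rw [Nat.mul_add_div hh, Nat.div_eq_of_lt j.2, Nat.add_zero]
  let g : Fin h → Fin N := fun j => ⟨h * s + j, (hb j).trans_le hLN⟩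
  have hinj : Function.Injective fun j => A (g j) (blockGraph N L h par) := by
    intro i j e
    by_contra hne
    refine hA.2 (blockGraph N L h par) (g i) (g j) ?_ e
    have hij : i.val ≠ j.val := fun e => hne (Fin.ext e)
    rcases lt_or_gt_of_ne hij with hlt | hlt
    · exact Or.inl ⟨by simpa [g] using hlt, Or.inr ⟨hb j, Or.inl (by simp only [g, hdiv])⟩⟩
    · exact Or.inr ⟨by simpa [g] using hlt, Or.inr ⟨hb i, Or.inl (by simp only [g, hdiv])⟩⟩
  have hc := Finset.card_le_card_of_injOn (s := (Finset.univ : Finset (Fin h)))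
    (t := blockColors A L h par {s}) _ (fun j _ => by
      apply Finset.mem_image_of_mem (fun v => A v (blockGraph N L h par))
      simp [g, hdiv]) hinj.injOn
  simpa using hc

/-- A parent block shares no colour with its children. -/
lemma disjoint_blockColors {N : ℕ} {A : Fin N → SimpleGraph (Fin N) → ℕ}
    (hA : IsOnlineAlg A) {L h s : ℕ} (hh : 0 < h) {par : ℕ → ℕ} {X : Finset ℕ}
    (hL : h * (s + 1) ≤ L) (hX : ∀ b ∈ X, b < s ∧ par b = s) :
    Disjoint (blockColors A L h par {s}) (blockColors A L h par X) := by
  rw [Finset.disjoint_left]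
  intro c h1 h2
  simp only [blockColors, Finset.mem_image, Finset.mem_filter, Finset.mem_univ, true_and,
    Finset.mem_singleton] at h1 h2
  obtain ⟨v, hv, rfl⟩ := h1
  obtain ⟨u, hu, e⟩ := h2
  obtain ⟨hlt, hpar⟩ := hX _ hu
  refine hA.2 _ u v (Or.inl ⟨?_, Or.inr ⟨?_, Or.inr ?_⟩⟩) e
  · by_contra hle
    have : v.val / h ≤ u.val / h := Nat.div_le_div_right (by omega)
    omega
  · have : v.val < h * (s + 1) := by
      rw [Nat.mul_comm]
      exact (Nat.div_lt_iff_lt_mul hh).1 (by omega)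
    omega
  · rw [hv, hpar]

/-! ### The adversary's strategy -/

/-- The adversary's strategy: starting at block `s`, `2 ^ i - 1` further blocks suffice to expose a
set `X` of parentless new blocks carrying at least `i * h / 2` colours. -/
lemma exists_strategy {N : ℕ} {A : Fin N → SimpleGraph (Fin N) → ℕ}
    (hA : IsOnlineAlg A) {L h : ℕ} (hh : 0 < h) (hLN : L ≤ N) (i : ℕ) :
    ∀ (s : ℕ) (par : ℕ → ℕ), ForestBelow s par → h * (s + (2 ^ i - 1)) ≤ L →
      ∃ (par' : ℕ → ℕ) (X : Finset ℕ), ForestBelow (s + (2 ^ i - 1)) par' ∧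
        (∀ b < s, par' b = par b) ∧
        (∀ b ∈ X, s ≤ b ∧ b < s + (2 ^ i - 1) ∧ par' b = 0) ∧
        i * h ≤ 2 * (blockColors A L h par' X).card := by
  induction i with
  | zero =>
    intro s par hp _
    exact ⟨par, ∅, by simpa using hp, fun _ _ => rfl, by simp, by simp⟩
  | succ i ih =>
    intro s par hp hL
    have hpow : 1 ≤ 2 ^ i := Nat.one_le_two_pow
    obtain ⟨m, hm⟩ : ∃ m, m = 2 ^ i - 1 := ⟨_, rfl⟩
    have hm' : 2 ^ (i + 1) - 1 = m + m + 1 := by rw [pow_succ]; omega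
    rw [← hm] at ih
    rw [hm'] at hL ⊢
    obtain ⟨par1, X1, hp1, hag1, hX1, hC1⟩ :=
      ih s par hp ((Nat.mul_le_mul_left h (by omega)).trans hL)
    obtain ⟨par2, X2, hp2, hag2, hX2, hC2⟩ :=
      ih (s + m) par1 hp1 ((Nat.mul_le_mul_left h (by omega)).trans hL)
    have hX1' : ∀ b ∈ X1, par2 b = 0 := fun b hb => by
      obtain ⟨_, h2, h3⟩ := hX1 b hb
      rw [hag2 b h2, h3]
    rw [blockColors_congr hA (s := s + m) (par' := par2) (fun b hb => (hX1 b hb).2.1)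
      (fun b c hbc hc => by rw [hag2 b (by omega)])] at hC1
    by_cases hbig :
        (i + 1) * h ≤ 2 * (blockColors A L h par2 X1 ∪ blockColors A L h par2 X2).card
    · refine ⟨par2, X1 ∪ X2, ?_, ?_, ?_, ?_⟩
      · intro b hb
        have := hp2 b hb
        omega
      · intro b hb
        rw [hag2 b (by omega), hag1 b hb]
      · intro b hb
        rcases Finset.mem_union.1 hb with hb | hb
        · have := hX1 b hb
          have := hX1' b hb
          omega
        · have := hX2 b hb
          omega
      · rwa [blockColors_union]
    · -- the new block `s2` becomes the parent of all blocks exposed by the second run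
      obtain ⟨s2, hs2⟩ : ∃ s2, s2 = s + m + m := ⟨_, rfl⟩
      let par3 : ℕ → ℕ := fun b => if b ∈ X2 then s2 else par2 b
      have hcongr : ∀ b c, b < c → c < s2 → (c = par2 b ↔ c = par3 b) := by
        intro b c hbc hc
        dsimp only [par3]
        split_ifs with hb
        · have := (hX2 b hb).2.2
          omega
        · rfl
      have hnot : ∀ b, b < s + m ∨ s2 ≤ b → par3 b = par2 b := by
        intro b hb
        apply if_neg
        intro hb2
        have := hX2 b hb2
        omega
      have e1 := blockColors_congr hA (L := L) (h := h) (X := X1)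
        (fun b hb => by have := hX1 b hb; omega) hcongr
      have e2 := blockColors_congr hA (L := L) (h := h) (X := X2)
        (fun b hb => by have := hX2 b hb; omega) hcongr
      have hL2 : h * (s2 + 1) ≤ L := by
        refine (Nat.mul_le_mul_left h ?_).trans hL
        omega
      have hV := le_card_blockColors_singleton hA hh par3 hL2 hLN
      have hdisj : Disjoint (blockColors A L h par3 {s2}) (blockColors A L h par3 X2) :=
        disjoint_blockColors hA hh hL2 fun b hb => by
          have := hX2 b hb
          exact ⟨by omega, if_pos hb⟩
      refine ⟨par3, X1 ∪ {s2}, ?_, ?_, ?_, ?_⟩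
      · intro b hb
        dsimp only [par3] at hb ⊢
        split_ifs at hb ⊢ with hb2
        · have := hX2 b hb2
          omega
        · have := hp2 b hb
          omega
      · intro b hb
        rw [hnot b (by omega), hag2 b (by omega), hag1 b hb]
      · intro b hb
        rcases Finset.mem_union.1 hb with hb | hb
        · have := hX1 b hb
          have := hX1' b hb
          have := hnot b (by omega)
          omega
        · rw [Finset.mem_singleton] at hb
          subst hb
          refine ⟨by omega, by omega, ?_⟩
          rw [hnot _ (Or.inr le_rfl)]
          by_contra hne
          have := hp2 _ hne
          omega
      · rw [blockColors_union]
        rw [e1] at hC1 hbig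
        rw [e2] at hC2 hbig
        generalize blockColors A L h par3 X1 = C1 at *
        generalize blockColors A L h par3 X2 = C2 at *
        generalize blockColors A L h par3 {s2} = V at *
        have k1 := Finset.card_union_add_card_inter C1 V
        have k2 := Finset.card_union_add_card_inter C1 C2
        -- `C₁ ∩ V` and `C₁ ∩ C₂` are disjoint subsets of `C₁`
        have k3 : (C1 ∩ V).card + (C1 ∩ C2).card ≤ C1.card := by
          rw [← Finset.card_union_of_disjoint
            (hdisj.mono Finset.inter_subset_right Finset.inter_subset_right)]
          exact Finset.card_le_card
            (Finset.union_subset Finset.inter_subset_left Finset.inter_subset_left)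
        rw [Nat.add_mul] at hbig ⊢
        omega

theorem det_lower_bound_chordal_exact (d k : ℕ) (hd : 2 ≤ d) (hk : 1 ≤ k)
    (A : Fin (d * 2 ^ k) → SimpleGraph (Fin (d * 2 ^ k)) → ℕ) (hA : IsOnlineAlg A) :
    ∃ G : SimpleGraph (Fin (d * 2 ^ k)), G.IsChordal ∧ G.chromaticNumber = d ∧
      ((d : ℝ) - 1) * k / 4 ≤ (colorsUsed A G : ℝ) := by
  have hh : 0 < d / 2 := by omega
  have hdN : d ≤ d * 2 ^ k := Nat.le_mul_of_pos_right _ (by positivity)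
  have hL : d / 2 * (0 + (2 ^ k - 1)) ≤ d * 2 ^ k - d := by
    rw [Nat.zero_add, ← Nat.mul_sub_one]
    exact Nat.mul_le_mul_right _ (Nat.div_le_self d 2)
  obtain ⟨par, X, hp, -, -, hC⟩ := exists_strategy hA hh (Nat.sub_le _ d) k 0 (fun _ => 0)
    (fun _ h => absurd rfl h) hL
  refine ⟨blockGraph _ (d * 2 ^ k - d) (d / 2) par, blockGraph_isChordal _ _ _ _,
    blockGraph_chromaticNumber hh (by omega) (by omega) hp, ?_⟩
  have hle : (blockColors A (d * 2 ^ k - d) (d / 2) par X).card ≤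
      colorsUsed A (blockGraph _ (d * 2 ^ k - d) (d / 2) par) :=
    Finset.card_le_card (Finset.image_subset_image (Finset.filter_subset _ _))
  have h1 : k * (d / 2) ≤ 2 * colorsUsed A (blockGraph _ (d * 2 ^ k - d) (d / 2) par) :=
    hC.trans (Nat.mul_le_mul_left 2 hle)
  have h2 : d ≤ 2 * (d / 2) + 1 := by omega
  have h1' : (k : ℝ) * ((d / 2 : ℕ) : ℝ) ≤
      2 * (colorsUsed A (blockGraph _ (d * 2 ^ k - d) (d / 2) par) : ℝ) := by exact_mod_cast h1
  have h2' : (d : ℝ) ≤ 2 * ((d / 2 : ℕ) : ℝ) + 1 := by exact_mod_cast h2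
  have h3 := mul_le_mul_of_nonneg_right h2' (Nat.cast_nonneg (α := ℝ) k)
  linarith
end

section
/- There exists a constant α > 0 such that for every real ε with 0 < ε < 1, every integer d ≥ 2, every natural number n with (n : ℝ) ≥ 2·d^(1+ε) (real power), and every deterministic online coloring algorithm A on n-vertex graphs, there exists a chordal simple graph G on Fin n with chromatic number χ(G) = d such that the number of colors used by A on G is at least α·ε·d·log n, where log is the base-2 logarithm. -/
open Finset

/-! ### Elimination orders: chordality and coloring -/

/-- The neighbours of `v` that arrive after `v`. -/
noncomputable def laterNbrs {n : ℕ} (G : SimpleGraph (Fin n)) (v : Fin n) : Finset (Fin n) := by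
  classical exact univ.filter fun u => v < u ∧ G.Adj v u

lemma mem_laterNbrs {n : ℕ} {G : SimpleGraph (Fin n)} {v u : Fin n} :
    u ∈ laterNbrs G v ↔ v < u ∧ G.Adj v u := by
  simp [laterNbrs]

/-- A position of the game after `t` vertices have arrived: the vertices from `t` on are isolated,
and `0, 1, …` is a perfect elimination order in which every vertex has fewer than `d` later
neighbours. -/
structure ValidPos {n : ℕ} (d t : ℕ) (G : SimpleGraph (Fin n)) : Prop where
  lt : ∀ u v, G.Adj u v → (u : ℕ) < t
  elim : ∀ u v w, u < v → u < w → v ≠ w → G.Adj u v → G.Adj u w → G.Adj v w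
  card : ∀ v, (laterNbrs G v).card < d

lemma ValidPos.isChordal {n d t : ℕ} {G : SimpleGraph (Fin n)} (h : ValidPos d t G) :
    G.IsChordal := by
  classical
  intro v p hp hlen
  -- Rotate the cycle so that it starts at its smallest vertex; the two neighbours of that vertex
  -- on the cycle are then joined by a chord.
  obtain ⟨m, hm, hmin⟩ := p.support.toFinset.exists_min_image id ⟨v, by simp⟩
  have hm' : m ∈ p.support := by simpa using hm
  set q := p.rotate m hm' with hq
  have hqc : q.IsCycle := (SimpleGraph.Walk.isCycle_rotate hm').2 hp
  have hql : q.length = p.length := by simp [hq]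
  have hsup : ∀ i, q.getVert i ∈ p.support := fun i =>
    (SimpleGraph.Walk.mem_support_rotate_iff p m hm').1 (q.getVert_mem_support i)
  have hle : ∀ i, m ≤ q.getVert i := fun i => hmin _ (by simpa using hsup i)
  have ha : G.Adj m (q.getVert 1) := q.adj_snd hqc.not_nil
  have hb : G.Adj (q.getVert (q.length - 1)) m := q.adj_penultimate hqc.not_nil
  have inj : ∀ i j, 1 ≤ i → i ≤ q.length → 1 ≤ j → j ≤ q.length →
      q.getVert i = q.getVert j → i = j := fun i j h1 h2 h3 h4 e =>
    hqc.getVert_injOn (by exact ⟨h1, h2⟩) (by exact ⟨h3, h4⟩) e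
  have h0 : q.getVert 0 = q.getVert q.length := by simp
  have hne : q.getVert 1 ≠ q.getVert (q.length - 1) := fun e => by
    have := inj _ _ (by omega) (by omega) (by omega) (by omega) e
    omega
  refine ⟨q.getVert 1, q.getVert (q.length - 1), hsup _, hsup _,
    h.elim m _ _ (lt_of_le_of_ne (hle _) ha.ne) (lt_of_le_of_ne (hle _) hb.ne') hne ha hb.symm, ?_⟩
  rw [← (p.rotate_edges m hm').mem_iff, ← hq, SimpleGraph.Walk.mk_mem_edges_iff_exists]
  rintro ⟨i, hi, e⟩
  rw [Sym2.eq_iff] at e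
  rcases Nat.eq_zero_or_pos i with rfl | hi0
  · rw [h0] at e
    rcases e with ⟨e, -⟩ | ⟨e, -⟩ <;>
    · have := inj _ _ (by omega) (by omega) (by omega) (by omega) e
      omega
  · rcases e with ⟨e, e'⟩ | ⟨e, e'⟩ <;>
    · have := inj _ _ (by omega) (by omega) (by omega) (by omega) e
      have := inj _ _ (by omega) (by omega) (by omega) (by omega) e'
      omega

lemma ValidPos.colorable {n d t : ℕ} {G : SimpleGraph (Fin n)} (h : ValidPos d t G) :
    G.Colorable d := by
  classical
  -- Greedy coloring from the last vertex to the first.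
  have key : ∀ k : ℕ, ∃ f : Fin n → Fin d, ∀ u v : Fin n, n ≤ u + k → u < v → G.Adj u v →
      f u ≠ f v := by
    intro k
    induction k with
    | zero =>
      refine ⟨fun v => ⟨0, (Nat.zero_le _).trans_lt (h.card v)⟩, fun u v hu => ?_⟩
      omega
    | succ k ih =>
      obtain ⟨f, hf⟩ := ih
      by_cases hk : k < n
      · let w : Fin n := ⟨n - (k + 1), by omega⟩
        have hw : (w : ℕ) = n - (k + 1) := rfl
        have hlt : ((laterNbrs G w).image f).card < (univ : Finset (Fin d)).card := by
          simpa using card_image_le.trans_lt (h.card w)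
        obtain ⟨c, -, hc⟩ := exists_mem_notMem_of_card_lt_card hlt
        refine ⟨Function.update f w c, fun u v hu huv ha => ?_⟩
        have hvw : v ≠ w := by
          rintro rfl
          have : (u : ℕ) < w := huv
          omega
        rw [Function.update_of_ne hvw]
        by_cases huw : u = w
        · subst huw
          rw [Function.update_self]
          rintro rfl
          exact hc (mem_image_of_mem _ (mem_laterNbrs.2 ⟨huv, ha⟩))
        · rw [Function.update_of_ne huw]
          have : (u : ℕ) ≠ w := fun e => huw (Fin.ext e)
          exact hf u v (by omega) huv ha
      · exact ⟨f, fun u v hu => hf u v (by omega)⟩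
  obtain ⟨f, hf⟩ := key n
  refine ⟨SimpleGraph.Coloring.mk f fun {u v} ha => ?_⟩
  rcases lt_or_gt_of_ne ha.ne with huv | huv
  · exact hf u v (by omega) huv ha
  · exact (hf v u (by omega) huv ha.symm).symm

/-! ### Pointed sets and the attachment of a new clique -/

/-- `S` is a pointed set of `G` inside the time interval `[t₀, t₁)`: a clique of size `h` arriving
after `t₁` may still be joined to it. -/
structure PointedSet {n : ℕ} (G : SimpleGraph (Fin n)) (t₀ t₁ h : ℕ) (S : Finset (Fin n)) : Prop where
  ge : ∀ v ∈ S, t₀ ≤ (v : ℕ)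
  lt : ∀ v ∈ S, (v : ℕ) < t₁
  closed : ∀ v ∈ S, ∀ u, v < u → G.Adj v u → u ∈ S
  card : ∀ v ∈ S, (laterNbrs G v).card < h

/-- `G'` extends the position `G` after `t` arrivals by vertices not joined to earlier ones. -/
def Extends {n : ℕ} (t : ℕ) (G G' : SimpleGraph (Fin n)) : Prop :=
  ∀ u v : Fin n, (u : ℕ) < t → (G.Adj u v ↔ G'.Adj u v)

lemma Extends.laterNbrs_eq {n t : ℕ} {G G' : SimpleGraph (Fin n)} (h : Extends t G G')
    {v : Fin n} (hv : (v : ℕ) < t) : laterNbrs G' v = laterNbrs G v := by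
  ext u
  simp [mem_laterNbrs, h v u hv]

lemma PointedSet.of_extends {n t₀ t₁ h t : ℕ} {G G' : SimpleGraph (Fin n)} {S : Finset (Fin n)}
    (hS : PointedSet G t₀ t₁ h S) (he : ∀ u ∈ S, ∀ v, G.Adj u v ↔ G'.Adj u v) (ht : t₁ ≤ t) :
    PointedSet G' t₀ t h S where
  ge := hS.ge
  lt v hv := (hS.lt v hv).trans_le ht
  closed v hv u huv ha := hS.closed v hv u huv ((he v hv u).2 ha)
  card v hv := by
    have : laterNbrs G' v = laterNbrs G v := by
      ext u
      simp [mem_laterNbrs, he v hv u]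
    rw [this]
    exact hS.card v hv

lemma PointedSet.union {n t₀ t₁ t₂ h : ℕ} {G : SimpleGraph (Fin n)} {S S' : Finset (Fin n)}
    (hS : PointedSet G t₀ t₂ h S) (hS' : PointedSet G t₁ t₂ h S') (ht : t₀ ≤ t₁) :
    PointedSet G t₀ t₂ h (S ∪ S') where
  ge v hv := (mem_union.1 hv).elim (hS.ge v) fun hv => ht.trans (hS'.ge v hv)
  lt v hv := (mem_union.1 hv).elim (hS.lt v) (hS'.lt v)
  closed v hv u huv ha := mem_union.2 <| (mem_union.1 hv).imp
    (fun hv => hS.closed v hv u huv ha) fun hv => hS'.closed v hv u huv ha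
  card v hv := (mem_union.1 hv).elim (hS.card v) (hS'.card v)

/-- Make `K` a clique and join it completely to `S`. -/
def attachClique {n : ℕ} (G : SimpleGraph (Fin n)) (S K : Finset (Fin n)) : SimpleGraph (Fin n) :=
  G ⊔ SimpleGraph.fromRel fun u v => u ∈ K ∧ (v ∈ K ∨ v ∈ S)

lemma attachClique_adj {n : ℕ} {G : SimpleGraph (Fin n)} {S K : Finset (Fin n)} {u v : Fin n} :
    (attachClique G S K).Adj u v ↔
      G.Adj u v ∨ u ≠ v ∧ (u ∈ K ∧ (v ∈ K ∨ v ∈ S) ∨ v ∈ K ∧ (u ∈ K ∨ u ∈ S)) := by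
  simp [attachClique]

/-- The vertices arriving in the time interval `[t, T)`. -/
def block (n t T : ℕ) : Finset (Fin n) := univ.filter fun v => t ≤ (v : ℕ) ∧ (v : ℕ) < T

lemma mem_block {n t T : ℕ} {v : Fin n} : v ∈ block n t T ↔ t ≤ (v : ℕ) ∧ (v : ℕ) < T := by
  simp [block]

lemma card_block {n t T : ℕ} (hT : T ≤ n) : (block n t T).card = T - t := by
  rw [← Nat.card_Ico t T, ← card_map Fin.valEmbedding]
  congr 1
  ext x
  simp only [mem_map, mem_block, Fin.valEmbedding_apply, mem_Ico]
  constructor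
  · rintro ⟨v, hv, rfl⟩
    exact hv
  · intro hx
    exact ⟨⟨x, by omega⟩, hx, rfl⟩

lemma laterNbrs_attachClique_of_mem_block {n d t T : ℕ} {G : SimpleGraph (Fin n)}
    {S : Finset (Fin n)} (hG : ValidPos d t G) (hSt : ∀ v ∈ S, (v : ℕ) < t) {v : Fin n}
    (hv : v ∈ block n t T) :
    laterNbrs (attachClique G S (block n t T)) v ⊆ (block n t T).erase v := by
  intro u hu
  rw [mem_laterNbrs, attachClique_adj] at hu
  obtain ⟨hvu, hu⟩ := hu
  have h1 := hG.lt v u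
  have h2 := hSt u
  have h3 := hSt v
  have h4 : (v : ℕ) < u := hvu
  have hv' := mem_block.1 hv
  rw [mem_erase]
  refine ⟨hvu.ne', ?_⟩
  rcases hu with hu | ⟨-, ⟨-, hu | hu⟩ | ⟨hu, -⟩⟩
  · have := h1 hu
    omega
  · exact hu
  · have := h2 hu
    omega
  · exact hu

lemma ValidPos.attach {n d t T : ℕ} {G : SimpleGraph (Fin n)} {S : Finset (Fin n)}
    (hG : ValidPos d t G) (htT : t ≤ T) (hT : T ≤ n) (hK : T - t ≤ d)
    (hSt : ∀ v ∈ S, (v : ℕ) < t)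
    (hcl : ∀ v ∈ S, ∀ u, v < u → G.Adj v u → u ∈ S)
    (hcard : ∀ v ∈ S, (laterNbrs G v).card + (T - t) < d) :
    ValidPos d T (attachClique G S (block n t T)) where
  lt u v ha := by
    rw [attachClique_adj] at ha
    have h1 := hG.lt u v
    have h2 := hSt u
    simp only [mem_block] at ha
    grind
  elim u v w huv huw hvw hv hw := by
    have hu1 : (u : ℕ) < v := huv
    have hu2 : (u : ℕ) < w := huw
    by_cases huK : u ∈ block n t T
    · have hv' := laterNbrs_attachClique_of_mem_block hG hSt huK (mem_laterNbrs.2 ⟨huv, hv⟩)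
      have hw' := laterNbrs_attachClique_of_mem_block hG hSt huK (mem_laterNbrs.2 ⟨huw, hw⟩)
      exact attachClique_adj.2 (Or.inr ⟨hvw, Or.inl
        ⟨mem_of_mem_erase hv', Or.inl (mem_of_mem_erase hw')⟩⟩)
    · have h1 := hG.elim u v w huv huw hvw
      have h2 := hcl u
      rw [attachClique_adj] at hv hw ⊢
      grind
  card v := by
    by_cases hvK : v ∈ block n t T
    · have h1 := card_le_card (laterNbrs_attachClique_of_mem_block hG hSt hvK)
      have h2 := card_erase_lt_of_mem hvK
      rw [card_block hT] at h2
      omega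
    · by_cases hvS : v ∈ S
      · have hsub : laterNbrs (attachClique G S (block n t T)) v ⊆
            laterNbrs G v ∪ block n t T := by
          intro u hu
          rw [mem_laterNbrs, attachClique_adj] at hu
          rw [mem_union, mem_laterNbrs]
          grind
        have h1 := (card_le_card hsub).trans (card_union_le _ _)
        rw [card_block hT] at h1
        exact h1.trans_lt (hcard v hvS)
      · have hsub : laterNbrs (attachClique G S (block n t T)) v ⊆ laterNbrs G v := by
          intro u hu
          rw [mem_laterNbrs, attachClique_adj] at hu
          rw [mem_laterNbrs]
          grind
        exact (card_le_card hsub).trans_lt (hG.card v)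

lemma pointed_block {n d t T h : ℕ} {G : SimpleGraph (Fin n)} {S : Finset (Fin n)}
    (hG : ValidPos d t G) (hT : T ≤ n) (hK : T - t ≤ h) (hSt : ∀ v ∈ S, (v : ℕ) < t) :
    PointedSet (attachClique G S (block n t T)) t T h (block n t T) where
  ge v hv := (mem_block.1 hv).1
  lt v hv := (mem_block.1 hv).2
  closed v hv u huv ha := mem_of_mem_erase
    (laterNbrs_attachClique_of_mem_block hG hSt hv (mem_laterNbrs.2 ⟨huv, ha⟩))
  card v hv := by
    have h1 := card_le_card (laterNbrs_attachClique_of_mem_block hG hSt hv)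
    have h2 := card_erase_lt_of_mem hv
    rw [card_block hT] at h2
    omega

/-! ### The adversary -/

/-- Colors given before time `t` are not affected by an extension after time `t`. -/
lemma image_eq_of_agree {n t : ℕ} {A : Fin n → SimpleGraph (Fin n) → ℕ} (hA : IsOnlineAlg A)
    {G G' : SimpleGraph (Fin n)}
    (h : ∀ u v : Fin n, (u : ℕ) < t → (v : ℕ) < t → (G.Adj u v ↔ G'.Adj u v))
    {S : Finset (Fin n)} (hS : ∀ v ∈ S, (v : ℕ) < t) :
    S.image (fun v => A v G') = S.image fun v => A v G := by
  refine image_congr fun v hv => hA.1 v G' G fun a b ha hb => ?_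
  have hv' := hS v hv
  have ha' : (a : ℕ) ≤ v := ha
  have hb' : (b : ℕ) ≤ v := hb
  exact (h a b (by omega) (by omega)).symm

/-- Level `i` of the adversary: from any position at time `t`, spending `(2 ^ i - 1) h` vertices,
it reaches a position with a pointed set of new vertices carrying at least `i r` colors. -/
lemma exists_pointed {n d h r : ℕ} {A : Fin n → SimpleGraph (Fin n) → ℕ} (hA : IsOnlineAlg A)
    (hd : 2 * h ≤ d) (hr : 2 * r ≤ h + 1) (i : ℕ) :
    ∀ (t T : ℕ) (G : SimpleGraph (Fin n)), ValidPos d t G → t + 2 ^ i * h = T + h → T ≤ n →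
      ∃ (G' : SimpleGraph (Fin n)) (S : Finset (Fin n)), Extends t G G' ∧ ValidPos d T G' ∧
        PointedSet G' t T h S ∧ i * r ≤ (S.image fun v => A v G').card := by
  induction i with
  | zero =>
    intro t T G hG ht hT
    obtain rfl : t = T := by omega
    exact ⟨G, ∅, fun _ _ _ => Iff.rfl, hG, ⟨by simp, by simp, by simp, by simp⟩, by simp⟩
  | succ i ih =>
    intro t T G hG ht hT
    have hpow : h ≤ 2 ^ i * h := Nat.le_mul_of_pos_left h (by positivity)
    have hpow' : 2 ^ (i + 1) * h = 2 * (2 ^ i * h) := by ring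
    set t₁ := t + 2 ^ i * h - h with ht₁
    set t₂ := t₁ + 2 ^ i * h - h with ht₂
    obtain ⟨G₁, S₁, hE₁, hV₁, hP₁, hc₁⟩ := ih t t₁ G hG (by omega) (by omega)
    obtain ⟨G₂, S₂, hE₂, hV₂, hP₂, hc₂⟩ := ih t₁ t₂ G₁ hV₁ (by omega) (by omega)
    have hP₁' : PointedSet G₂ t t₂ h S₁ :=
      hP₁.of_extends (fun u hu v => hE₂ u v (hP₁.lt u hu)) (by omega)
    have hc₁' : i * r ≤ (S₁.image fun v => A v G₂).card := by
      rwa [image_eq_of_agree hA (fun u v hu _ => hE₂ u v hu) hP₁.lt]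
    have hsucc : (i + 1) * r = i * r + r := by ring
    by_cases hbig : (i + 1) * r ≤ ((S₁ ∪ S₂).image fun v => A v G₂).card
    · refine ⟨G₂, S₁ ∪ S₂, fun u v hu => (hE₁ u v hu).trans (hE₂ u v (by omega)),
        ⟨fun u v ha => (hV₂.lt u v ha).trans_le (by omega), hV₂.elim, hV₂.card⟩,
        (hP₁'.union hP₂ (by omega)).of_extends (fun _ _ _ => Iff.rfl) (by omega), hbig⟩
    · set K := block n t₂ T with hKdef
      set G₃ := attachClique G₂ S₁ K with hG₃
      have hTt : T - t₂ = h := by omega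
      have hE₃ : ∀ u v : Fin n, (u : ℕ) < t₂ → u ∉ S₁ → (G₂.Adj u v ↔ G₃.Adj u v) := by
        intro u v hu huS
        have huK : u ∉ K := fun hK => by
          have := (mem_block.1 hK).1
          omega
        rw [hG₃, attachClique_adj]
        tauto
      have hA₃ : ∀ u v : Fin n, (u : ℕ) < t₂ → (v : ℕ) < t₂ → (G₂.Adj u v ↔ G₃.Adj u v) := by
        intro u v hu hv
        have huK : u ∉ K := fun hK => by
          have := (mem_block.1 hK).1
          omega
        have hvK : v ∉ K := fun hK => by
          have := (mem_block.1 hK).1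
          omega
        rw [hG₃, attachClique_adj]
        tauto
      have hV₃ : ValidPos d T G₃ := by
        refine hV₂.attach (by omega) hT (by omega) hP₁'.lt hP₁'.closed fun v hv => ?_
        have := hP₁'.card v hv
        omega
      have hP₃ : PointedSet G₃ t₂ T h K := pointed_block hV₂ hT hTt.le hP₁'.lt
      have hS₂ : ∀ u ∈ S₂, u ∉ S₁ := fun u hu hu' => by
        have := hP₂.ge u hu
        have := hP₁.lt u hu'
        omega
      have hP₂' : PointedSet G₃ t₁ T h S₂ :=
        hP₂.of_extends (fun u hu v => hE₃ u v (hP₂.lt u hu) (hS₂ u hu)) (by omega)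
      refine ⟨G₃, S₂ ∪ K, fun u v hu => ?_, hV₃,
        ⟨?_, (hP₂'.union hP₃ (by omega)).lt, (hP₂'.union hP₃ (by omega)).closed,
          (hP₂'.union hP₃ (by omega)).card⟩, ?_⟩
      · have huS : u ∉ S₁ := fun hu' => by
          have := hP₁.ge u hu'
          omega
        exact ((hE₁ u v hu).trans (hE₂ u v (by omega))).trans (hE₃ u v (by omega) huS)
      · intro v hv
        have := (hP₂'.union hP₃ (by omega)).ge v hv
        omega
      · have e₁ := image_eq_of_agree hA hA₃ hP₁'.lt
        have e₂ := image_eq_of_agree hA hA₃ hP₂.lt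
        rw [image_union, ← e₁, ← e₂] at hbig
        rw [← e₁] at hc₁'
        rw [← e₂] at hc₂
        rw [image_union]
        set C₁ := S₁.image fun v => A v G₃
        set C₂ := S₂.image fun v => A v G₃
        set C := K.image fun v => A v G₃ with hC
        have hCcard : C.card = h := by
          rw [hC, card_image_of_injOn, card_block hT, hTt]
          intro u hu v hv e
          by_contra hne
          exact hA.2 G₃ u v (attachClique_adj.2 (Or.inr ⟨hne, Or.inl ⟨hu, Or.inl hv⟩⟩)) e
        have hdisj : Disjoint C₁ C := by
          rw [disjoint_left]
          intro c hc hc'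
          obtain ⟨u, hu, rfl⟩ := mem_image.1 hc
          obtain ⟨v, hv, e⟩ := mem_image.1 hc'
          have hvu : v ≠ u := by
            rintro rfl
            have := (mem_block.1 hv).1
            have := hP₁'.lt v hu
            omega
          exact hA.2 G₃ v u (attachClique_adj.2 (Or.inr ⟨hvu, Or.inl ⟨hv, Or.inr hu⟩⟩)) e
        -- `C ∩ C₂ ⊆ C₂ \ C₁`, and `C₂ \ C₁` has fewer than `r` elements.
        have h1 : (C ∩ C₂).card ≤ (C₂ \ C₁).card := by
          refine card_le_card fun c hc => ?_
          rw [mem_inter] at hc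
          exact mem_sdiff.2 ⟨hc.2, fun hc₁ => disjoint_left.1 hdisj hc₁ hc.1⟩
        have h2 : (C₁ ∪ C₂).card = C₁.card + (C₂ \ C₁).card := by
          rw [← card_union_of_disjoint disjoint_sdiff, union_sdiff_self_eq_union]
        have h3 := card_union_add_card_inter C C₂
        rw [union_comm C₂ C]
        omega

/-- The final graph consists of a disjoint `d`-clique, the graph built by the adversary, and
isolated vertices. -/
lemma exists_graph {n d i : ℕ} {A : Fin n → SimpleGraph (Fin n) → ℕ} (hA : IsOnlineAlg A)
    (hd : 2 ≤ d) (hn : d + 2 ^ i * (d / 2) ≤ n + d / 2) :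
    ∃ G : SimpleGraph (Fin n), G.IsChordal ∧ G.chromaticNumber = d ∧
      i * ((d / 2 + 1) / 2) ≤ colorsUsed A G := by
  have hpow : d / 2 ≤ 2 ^ i * (d / 2) := Nat.le_mul_of_pos_left _ (by positivity)
  have hdn : d ≤ n := by omega
  have hbot : ValidPos d 0 (⊥ : SimpleGraph (Fin n)) := by
    refine ⟨by simp, by simp, fun v => ?_⟩
    have : laterNbrs (⊥ : SimpleGraph (Fin n)) v = ∅ := by
      ext u
      simp [mem_laterNbrs]
    rw [this, card_empty]
    omega
  -- The first `d` vertices form a clique, which forces `d` colors.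
  have hV₀ := hbot.attach (S := ∅) (Nat.zero_le d) hdn (by omega) (by simp) (by simp)
    (by simp)
  obtain ⟨G, S, hE, hV, -, hc⟩ := exists_pointed hA (h := d / 2) (r := (d / 2 + 1) / 2)
    (by omega) (by omega) i d (d + 2 ^ i * (d / 2) - d / 2) _ hV₀ (by omega) (by omega)
  refine ⟨G, hV.isChordal, le_antisymm hV.colorable.chromaticNumber_le ?_, hc.trans ?_⟩
  · refine SimpleGraph.le_chromaticNumber_of_pairwise_adj (ι := Fin d) (by simp)
      (Fin.castLE hdn) fun a b hab => ?_
    change G.Adj _ _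
    rw [← hE _ _ (by simp), attachClique_adj]
    refine Or.inr ⟨fun e => hab (Fin.castLE_injective hdn e), Or.inl ?_⟩
    simp [mem_block]
  · exact card_le_card (image_subset_image (subset_univ S))

theorem det_lower_bound_chordal_eps :
    ∃ α : ℝ, 0 < α ∧
      ∀ (ε : ℝ), 0 < ε → ε < 1 →
        ∀ (d : ℕ), 2 ≤ d →
          ∀ (n : ℕ), 2 * (d : ℝ) ^ ((1 : ℝ) + ε) ≤ (n : ℝ) →
            ∀ (A : Fin n → SimpleGraph (Fin n) → ℕ), IsOnlineAlg A →
              ∃ G : SimpleGraph (Fin n), G.IsChordal ∧ G.chromaticNumber = d ∧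
                α * ε * d * Real.logb 2 n ≤ (colorsUsed A G : ℝ) := by
  refine ⟨1 / 32, by norm_num, fun ε hε hε1 d hd n hn A hA => ?_⟩
  have hd1 : (1 : ℝ) < d := by exact_mod_cast hd
  have hd0 : (0 : ℝ) < d := by linarith
  have hpow : (d : ℝ) ≤ (d : ℝ) ^ ((1 : ℝ) + ε) := by
    simpa using Real.rpow_le_rpow_of_exponent_le hd1.le (by linarith : (1 : ℝ) ≤ 1 + ε)
  have h2d : 2 * d ≤ n := by
    have : (2 * d : ℝ) ≤ n := by linarith
    exact_mod_cast this
  have hn0 : (0 : ℝ) < n := by linarith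
  have hq : n / d ≠ 0 := by
    have : 2 ≤ n / d := (Nat.le_div_iff_mul_le (by omega)).2 h2d
    omega
  set i := Nat.log 2 (n / d) with hi
  have hi1 : 1 ≤ i := by
    rw [hi]
    refine (Nat.le_log_iff_pow_le (by norm_num) hq).2 ?_
    exact (Nat.le_div_iff_mul_le (by omega)).2 (by simpa using h2d)
  have hlow : 2 ^ i * d ≤ n :=
    (Nat.le_div_iff_mul_le (by omega)).1 (Nat.pow_log_le_self 2 hq)
  have hup : n < 2 ^ (i + 1) * d :=
    (Nat.div_lt_iff_lt_mul (by omega)).1 (Nat.lt_pow_succ_log_self (by norm_num) _)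
  have hhalf : 2 * (2 ^ i * (d / 2)) ≤ n := by
    calc 2 * (2 ^ i * (d / 2)) = 2 ^ i * (2 * (d / 2)) := by ring
      _ ≤ 2 ^ i * d := Nat.mul_le_mul_left _ (by omega)
      _ ≤ n := hlow
  obtain ⟨G, hG, hχ, hc⟩ := exists_graph (i := i) hA hd (by clear_value i; omega)
  refine ⟨G, hG, hχ, ?_⟩
  have hc' : (i : ℝ) * (((d / 2 + 1) / 2 : ℕ) : ℝ) ≤ colorsUsed A G := by exact_mod_cast hc
  refine le_trans ?_ hc'
  have hr : (d : ℝ) / 8 ≤ (((d / 2 + 1) / 2 : ℕ) : ℝ) := by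
    have : d ≤ 8 * ((d / 2 + 1) / 2) := by omega
    have : (d : ℝ) ≤ 8 * (((d / 2 + 1) / 2 : ℕ) : ℝ) := by exact_mod_cast this
    linarith
  have hlogd : (1 + ε) * Real.logb 2 d ≤ Real.logb 2 n := by
    rw [← Real.logb_rpow_eq_mul_logb_of_pos hd0]
    exact Real.logb_le_logb_of_le (by norm_num) (by positivity) (by linarith)
  have hlogn : Real.logb 2 n ≤ (i + 1) + Real.logb 2 d := by
    have h1 : (n : ℝ) ≤ 2 ^ (i + 1) * d := by exact_mod_cast hup.le
    have h2 := Real.logb_le_logb_of_le (b := 2) (by norm_num) hn0 h1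
    rw [Real.logb_mul (by positivity) (by positivity), Real.logb_pow,
      Real.logb_self_eq_one (by norm_num)] at h2
    push_cast at h2
    linarith
  have hlogd0 : 0 ≤ Real.logb 2 d := Real.logb_nonneg (by norm_num) hd1.le
  have hi1' : (1 : ℝ) ≤ i := by exact_mod_cast hi1
  -- From `(1 + ε) log d ≤ log n` one gets `ε log n ≤ (1 + ε) (log n - log d) ≤ 4 i`.
  have hmain : ε * Real.logb 2 n ≤ 4 * i := by
    have h1 : ε * Real.logb 2 n ≤ (1 + ε) * (i + 1) := by nlinarith
    nlinarith
  calc 1 / 32 * ε * d * Real.logb 2 n = (ε * Real.logb 2 n) * (d / 32) := by ring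
    _ ≤ (4 * i) * (d / 32) := by gcongr
    _ = i * (d / 8) := by ring
    _ ≤ _ := by gcongr
end

section
/- For every integer d ≥ 2 and every integer k ≥ 1, with N = d·12^k, there exists a nonempty finite multiset 𝒢 of simple graphs on Fin N such that every graph in 𝒢 is chordal with chromatic number d, and for every deterministic online coloring algorithm A on N-vertex graphs, the average over G ∈ 𝒢 of the number of colors used by A on G is at least (d−1)·k/8. -/
/-! ### The random forest of blocks -/

/-- The number of nodes of the complete binary tree of depth `k`, i.e. `2 ^ k - 1`. -/
def treeSize : ℕ → ℕ
  | 0 => 0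
  | k + 1 => 2 * treeSize k + 1

/-- The active nodes of the subtree of depth `k` occupying the interval
`[o, o + treeSize k)` in postorder, for the coin flips `B` (a node is in `B` if its coin shows
heads). On heads the root replaces the active nodes of the left subtree, on tails it is ignored. -/
def active : ℕ → ℕ → Finset ℕ → Finset ℕ
  | 0, _, _ => ∅
  | k + 1, o, B =>
    if o + 2 * treeSize k ∈ B then
      insert (o + 2 * treeSize k) (active k (o + treeSize k) B)
    else active k o B ∪ active k (o + treeSize k) B

/-- `Par k o B s t`: inside the subtree of depth `k` starting at `o`, the node `t` shows heads and
`s` is an active node of its left subtree. The later node `t` is then the parent of `s` in the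
forest of blocks. -/
def Par : ℕ → ℕ → Finset ℕ → ℕ → ℕ → Prop
  | 0, _, _, _, _ => False
  | k + 1, o, B, s, t =>
    Par k o B s t ∨ Par k (o + treeSize k) B s t ∨
      (t = o + 2 * treeSize k ∧ t ∈ B ∧ s ∈ active k o B)

lemma treeSize_add_one (k : ℕ) : treeSize k + 1 = 2 ^ k := by
  induction k with
  | zero => rfl
  | succ k ih => simp only [treeSize, pow_succ]; omega

lemma active_range {k o : ℕ} {B : Finset ℕ} {s : ℕ} (hs : s ∈ active k o B) :
    o ≤ s ∧ s < o + treeSize k := by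
  induction k generalizing o with
  | zero => simp [active] at hs
  | succ k ih =>
    simp only [active] at hs
    simp only [treeSize]
    split_ifs at hs with hB
    · rcases Finset.mem_insert.1 hs with h | h
      · omega
      · have := ih h; omega
    · rcases Finset.mem_union.1 hs with h | h
      · have := ih h; omega
      · have := ih h; omega

lemma Par.range {k o : ℕ} {B : Finset ℕ} {s t : ℕ} (h : Par k o B s t) :
    o ≤ s ∧ s < t ∧ t < o + treeSize k := by
  induction k generalizing o with
  | zero => exact h.elim
  | succ k ih =>
    simp only [treeSize]
    rcases h with h | h | ⟨rfl, -, h⟩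
    · have := ih h; omega
    · have := ih h; omega
    · have := active_range h; omega

lemma active_congr {k o : ℕ} {B B' : Finset ℕ}
    (h : ∀ i < o + treeSize k, i ∈ B ↔ i ∈ B') : active k o B = active k o B' := by
  induction k generalizing o with
  | zero => rfl
  | succ k ih =>
    simp only [treeSize] at h
    have h1 := ih (o := o) fun i hi => h i (by omega)
    have h2 := ih (o := o + treeSize k) fun i hi => h i (by omega)
    have h3 := h (o + 2 * treeSize k) (by omega)
    simp only [active, h1, h2, h3]

/-- Whether `t` is the parent of `s` is decided by the coins of the nodes up to `t`. -/
lemma par_congr {k o : ℕ} {B B' : Finset ℕ} {s t : ℕ}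
    (h : ∀ i ≤ t, i ∈ B ↔ i ∈ B') : Par k o B s t ↔ Par k o B' s t := by
  induction k generalizing o with
  | zero => rfl
  | succ k ih =>
    simp only [Par]
    refine or_congr ih (or_congr ih (and_congr_right fun ht => and_congr (h t le_rfl) ?_))
    rw [active_congr fun i hi => h i (by omega)]

/-- Active nodes have no parent yet. -/
lemma not_par_of_active {k o : ℕ} {B : Finset ℕ} {s t : ℕ} (hs : s ∈ active k o B) :
    ¬ Par k o B s t := by
  induction k generalizing o with
  | zero => exact id
  | succ k ih =>
    simp only [active] at hs
    split_ifs at hs with hB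
    · rcases Finset.mem_insert.1 hs with rfl | hs
      · intro h
        have := h.range
        simp only [treeSize] at this
        omega
      · have r := active_range hs
        rintro (h | h | ⟨-, -, h⟩)
        · have := h.range; omega
        · exact ih hs h
        · have := active_range h; omega
    · rintro (h | h | ⟨rfl, h, -⟩)
      · have r := h.range
        rcases Finset.mem_union.1 hs with hs | hs
        · exact ih hs h
        · have := active_range hs; omega
      · have r := h.range
        rcases Finset.mem_union.1 hs with hs | hs
        · have := active_range hs; omega
        · exact ih hs h
      · exact hB h

lemma Par.unique {k o : ℕ} {B : Finset ℕ} {s t t' : ℕ} (h : Par k o B s t)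
    (h' : Par k o B s t') : t = t' := by
  induction k generalizing o with
  | zero => exact h.elim
  | succ k ih =>
    rcases h with h | h | ⟨rfl, -, h⟩ <;> rcases h' with h' | h' | ⟨rfl, -, h'⟩
    · exact ih h h'
    · have := h.range; have := h'.range; omega
    · exact (not_par_of_active h' h).elim
    · have := h.range; have := h'.range; omega
    · exact ih h h'
    · have := h.range; have := active_range h'; omega
    · exact (not_par_of_active h h').elim
    · have := h'.range; have := active_range h; omega
    · rfl

/-- The forest of blocks is bipartite. The induction needs a 2-colouring in which all active nodes
receive one prescribed colour `b`: a root showing heads then gets colour `b` while the active nodes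
of its left subtree get the other one. -/
lemma exists_two_coloring (k o : ℕ) (B : Finset ℕ) (b : Bool) :
    ∃ f : ℕ → Bool, (∀ s ∈ active k o B, f s = b) ∧ ∀ s t, Par k o B s t → f s ≠ f t := by
  induction k generalizing o b with
  | zero => exact ⟨fun _ => b, by simp [active], fun s t h => h.elim⟩
  | succ k ih =>
    obtain ⟨f, hf, hf'⟩ := ih o (if o + 2 * treeSize k ∈ B then !b else b)
    obtain ⟨g, hg, hg'⟩ := ih (o + treeSize k) b
    refine ⟨fun x => if x < o + treeSize k then f x else
      if x < o + 2 * treeSize k then g x else b, ?_, ?_⟩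
    · intro s hs
      beta_reduce
      simp only [active] at hs
      split_ifs at hs with hB
      · rcases Finset.mem_insert.1 hs with rfl | hs
        · rw [if_neg (by omega), if_neg (by omega)]
        · have r := active_range hs
          rw [if_neg (by omega), if_pos (by omega)]
          exact hg s hs
      · rcases Finset.mem_union.1 hs with hs | hs
        · have r := active_range hs
          rw [if_pos (by omega), hf s hs, if_neg hB]
        · have r := active_range hs
          rw [if_neg (by omega), if_pos (by omega)]
          exact hg s hs
    · rintro s t (h | h | ⟨rfl, hB, h⟩) <;> beta_reduce
      · have r := h.range
        rw [if_pos (by omega), if_pos (by omega)]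
        exact hf' s t h
      · have r := h.range
        rw [if_neg (by omega), if_pos (by omega), if_neg (by omega), if_pos (by omega)]
        exact hg' s t h
      · have r := active_range h
        rw [if_pos (by omega), if_neg (by omega), if_neg (by omega), hf s h, if_pos hB]
        simp

/-! ### Averaging over the coin flips -/

lemma mem_flip_of_ne {B : Finset ℕ} {i t : ℕ} (h : i ≠ t) : i ∈ symmDiff B {t} ↔ i ∈ B := by
  simp [Finset.mem_symmDiff, h]

lemma mem_flip_self {B : Finset ℕ} {t : ℕ} : t ∈ symmDiff B {t} ↔ t ∉ B := by
  simp [Finset.mem_symmDiff]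

lemma sum_flip {M t : ℕ} (ht : t < M) (f : Finset ℕ → ℕ) :
    ∑ B ∈ (Finset.range M).powerset, f (symmDiff B {t}) =
      ∑ B ∈ (Finset.range M).powerset, f B := by
  have key : ∀ B ∈ (Finset.range M).powerset, symmDiff B {t} ∈ (Finset.range M).powerset := by
    intro B hB
    rw [Finset.mem_powerset] at hB ⊢
    intro i hi
    by_cases h : i = t
    · simpa [h] using ht
    · exact hB ((mem_flip_of_ne h).1 hi)
  exact Finset.sum_nbij' (fun B => symmDiff B {t}) (fun B => symmDiff B {t}) key key
    (fun B _ => by simp) (fun B _ => by simp) (fun B _ => rfl)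

/-- The submodularity step: for `c` disjoint from `C`, the two possible new palettes `c ∪ C'` and
`C ∪ C'` have together at least `|C| + |C'| + |c|` colours. -/
lemma card_palettes {c C C' : Finset ℕ} (h : Disjoint C c) :
    C.card + C'.card + c.card ≤ (c ∪ C').card + (C ∪ C').card := by
  have h1 := Finset.card_union_add_card_inter (c ∪ C') (C ∪ C')
  have h2 : C'.card ≤ ((c ∪ C') ∩ (C ∪ C')).card :=
    Finset.card_le_card fun x hx => by simp [hx]
  have h3 : (C ∪ c).card ≤ ((c ∪ C') ∪ (C ∪ C')).card :=
    Finset.card_le_card fun x hx => by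
      simp only [Finset.mem_union] at hx ⊢; tauto
  rw [Finset.card_union_of_disjoint h] at h3
  omega

/-- Each level of the tree adds `h / 2` colours on average to the palette of the active blocks.
Here `c B s` is the set of colours of block `s` under the coin flips `B`; it only depends on the
coins up to `s`. The coin of the root is averaged out by pairing `B` with `B ∆ {t}`. -/
lemma palette_bound {M h : ℕ} (c : Finset ℕ → ℕ → Finset ℕ)
    (hcard : ∀ B, ∀ t < M, h ≤ (c B t).card)
    (hflip : ∀ B s t, s < t → c (symmDiff B {t}) s = c B s) (k o : ℕ)
    (hdis : ∀ B s t, Par k o B s t → Disjoint (c B s) (c B t)) (ho : o + treeSize k ≤ M) :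
    2 ^ M * (k * h) ≤
      2 * ∑ B ∈ (Finset.range M).powerset, ((active k o B).biUnion (c B)).card := by
  induction k generalizing o with
  | zero => simp
  | succ k ih =>
    simp only [treeSize] at ho
    have iha := ih o (fun B s t hp => hdis B s t (Or.inl hp)) (by omega)
    have ihb := ih (o + treeSize k) (fun B s t hp => hdis B s t (Or.inr (Or.inl hp))) (by omega)
    obtain ⟨t, ht⟩ : ∃ t, t = o + 2 * treeSize k := ⟨_, rfl⟩
    have inv : ∀ o', o' + treeSize k ≤ t → ∀ B,
        (active k o' (symmDiff B {t})).biUnion (c (symmDiff B {t})) =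
          (active k o' B).biUnion (c B) := by
      intro o' ho' B
      rw [active_congr (B' := B) fun i hi => mem_flip_of_ne (by omega)]
      refine Finset.biUnion_congr rfl fun s hs => hflip B s t ?_
      have := active_range hs
      omega
    have inva := inv o (by omega)
    have invb := inv (o + treeSize k) (by omega)
    have heads : ∀ B, t ∈ B →
        ((active k o B).biUnion (c B)).card +
            ((active k (o + treeSize k) B).biUnion (c B)).card + h ≤
          ((active (k + 1) o B).biUnion (c B)).card +
            ((active (k + 1) o (symmDiff B {t})).biUnion (c (symmDiff B {t}))).card := by
      intro B hB
      have hB' : t ∉ symmDiff B {t} := fun hh => mem_flip_self.1 hh hB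
      simp only [active, ← ht]
      rw [if_pos hB, if_neg hB', Finset.biUnion_insert, Finset.union_biUnion, inva, invb]
      have hd : Disjoint ((active k o B).biUnion (c B)) (c B t) := by
        rw [Finset.disjoint_biUnion_left]
        exact fun s hs => hdis B s t (Or.inr (Or.inr ⟨ht, hB, hs⟩))
      have h1 := card_palettes (C' := (active k (o + treeSize k) B).biUnion (c B)) hd
      have h2 := hcard B t (by omega)
      omega
    have both : ∀ B,
        ((active k o B).biUnion (c B)).card +
            ((active k (o + treeSize k) B).biUnion (c B)).card + h ≤
          ((active (k + 1) o B).biUnion (c B)).card +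
            ((active (k + 1) o (symmDiff B {t})).biUnion (c (symmDiff B {t}))).card := by
      intro B
      by_cases hB : t ∈ B
      · exact heads B hB
      · have := heads (symmDiff B {t}) (mem_flip_self.2 hB)
        rw [inva, invb, symmDiff_symmDiff_cancel_right] at this
        omega
    have hsum := Finset.sum_le_sum fun B (_ : B ∈ (Finset.range M).powerset) => both B
    simp only [Finset.sum_add_distrib] at hsum
    rw [sum_flip (by omega) fun B => ((active (k + 1) o B).biUnion (c B)).card] at hsum
    simp only [Finset.sum_const, Finset.card_powerset, Finset.card_range, smul_eq_mul] at hsum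
    have : 2 ^ M * ((k + 1) * h) = 2 ^ M * (k * h) + 2 ^ M * h := by ring
    omega

/-! ### A perfect elimination ordering gives chordality -/

/-- If the later neighbours of every vertex form a clique, the graph is chordal: the two neighbours
on a cycle of its smallest vertex are adjacent. -/
lemma isChordal_of_elimination {V : Type*} [LinearOrder V] {G : SimpleGraph V}
    (h : ∀ u v w, u < v → u < w → v ≠ w → G.Adj u v → G.Adj u w → G.Adj v w) :
    G.IsChordal := by
  intro v₀ p₀ hp₀ hl₀
  obtain ⟨u, hu, hmin⟩ := p₀.support.toFinset.exists_min_image id ⟨v₀, by simp⟩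
  simp only [List.mem_toFinset, id] at hu hmin
  -- rotate the cycle so that it starts at its smallest vertex
  obtain ⟨p, hp, hl, hsupp, hedge⟩ : ∃ p : G.Walk u u, p.IsCycle ∧ 4 ≤ p.length ∧
      (∀ x, x ∈ p.support → x ∈ p₀.support) ∧ ∀ e, e ∈ p₀.edges → e ∈ p.edges :=
    ⟨p₀.rotate u hu, hp₀.rotate hu, by simpa using hl₀,
      fun x hx => (p₀.mem_support_rotate_iff u hu).1 hx,
      fun e he => (p₀.rotate_edges u hu).mem_iff.2 he⟩
  have hnil : ¬ p.Nil := hp.not_nil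
  have ha1 : G.Adj u p.snd := p.adj_snd hnil
  have ha2 : G.Adj u p.penultimate := (p.adj_penultimate hnil).symm
  have hs1 : p.snd ∈ p.support := p.getVert_mem_support 1
  have hs2 : p.penultimate ∈ p.support := p.getVert_mem_support _
  refine ⟨p.snd, p.penultimate, hsupp _ hs1, hsupp _ hs2, h u _ _
    (lt_of_le_of_ne (hmin _ (hsupp _ hs1)) ha1.ne) (lt_of_le_of_ne (hmin _ (hsupp _ hs2)) ha2.ne)
    hp.snd_ne_penultimate ha1 ha2, fun he => ?_⟩
  obtain ⟨i, hi, hii⟩ := (SimpleGraph.Walk.mk_mem_edges_iff_exists p).1 (hedge _ he)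
  have inj : ∀ a b, 1 ≤ a → a ≤ p.length → 1 ≤ b → b ≤ p.length →
      p.getVert a = p.getVert b → a = b := fun a b h1 h2 h3 h4 hab =>
    hp.getVert_injOn ⟨h1, h2⟩ ⟨h3, h4⟩ hab
  have h0 : p.getVert 0 = p.getVert p.length := by simp
  have hsnd : p.snd = p.getVert 1 := rfl
  have hpen : p.penultimate = p.getVert (p.length - 1) := rfl
  rw [hsnd, hpen] at hii
  rcases Nat.eq_zero_or_pos i with rfl | hi0
  · rw [h0] at hii
    rcases Sym2.eq_iff.1 hii with ⟨h1, -⟩ | ⟨h1, -⟩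
    · have := inj _ _ (by omega) le_rfl le_rfl (by omega) h1; omega
    · have := inj _ _ (by omega) le_rfl (by omega) (by omega) h1; omega
  · rcases Sym2.eq_iff.1 hii with ⟨h1, h2⟩ | ⟨-, h2⟩
    · have := inj _ _ hi0 hi.le le_rfl (by omega) h1
      have := inj _ _ (by omega) (by omega) (by omega) (by omega) h2
      omega
    · have := inj _ _ (by omega) (by omega) (by omega) (by omega) h2
      omega

/-! ### The hard graphs -/

/-- The graph on `Fin N` for the coin flips `B`. The first `h * treeSize k` vertices are cut into
consecutive blocks of `h` vertices, the block of `x` being `x / h`; each block is a clique and is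
completely joined to its parent block. The last `d` vertices form a separate clique. -/
def hardGraph (N d h k : ℕ) (B : Finset ℕ) : SimpleGraph (Fin N) where
  Adj x y := x ≠ y ∧
    ((x / h < treeSize k ∧ y / h < treeSize k ∧
      ((x / h : ℕ) = y / h ∨ Par k 0 B (x / h) (y / h) ∨ Par k 0 B (y / h) (x / h))) ∨
    (N ≤ x + d ∧ N ≤ y + d))
  symm := ⟨by
    rintro x y ⟨hne, ⟨hx, hy, h⟩ | ⟨hx, hy⟩⟩
    · refine ⟨hne.symm, Or.inl ⟨hy, hx, ?_⟩⟩
      rcases h with h | h | h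
      exacts [Or.inl h.symm, Or.inr (Or.inr h), Or.inr (Or.inl h)]
    · exact ⟨hne.symm, Or.inr ⟨hy, hx⟩⟩⟩
  loopless := ⟨fun x hx => hx.1 rfl⟩

section HardGraph

variable {N d h k : ℕ} {B : Finset ℕ}

/-- There is room for the final clique behind the blocks. -/
lemma block_lt (hN : h * treeSize k + d ≤ N) {x : ℕ} (hx : x / h < treeSize k) (hh : 1 ≤ h) :
    x + d < N := by
  have := (Nat.div_lt_iff_lt_mul hh).1 hx
  rw [mul_comm] at this
  omega

lemma hardGraph_isChordal (hh : 1 ≤ h) (hN : h * treeSize k + d ≤ N) :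
    (hardGraph N d h k B).IsChordal := by
  refine isChordal_of_elimination ?_
  rintro u v w huv huw hvw ⟨-, h1⟩ ⟨-, h2⟩
  refine ⟨hvw, ?_⟩
  have dv : (u / h : ℕ) ≤ v / h := Nat.div_le_div_right (by exact_mod_cast huv.le)
  have dw : (u / h : ℕ) ≤ w / h := Nat.div_le_div_right (by exact_mod_cast huw.le)
  rcases h1 with ⟨hu, hv, h1⟩ | ⟨hu, hv⟩ <;> rcases h2 with ⟨hu', hw, h2⟩ | ⟨hu', hw⟩
  · refine Or.inl ⟨hv, hw, ?_⟩
    rcases h1 with h1 | h1 | h1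
    · rw [← h1]; exact h2
    · rcases h2 with h2 | h2 | h2
      · rw [← h2]; exact Or.inr (Or.inr h1)
      · exact Or.inl (h1.unique h2)
      · have := h2.range; omega
    · have := h1.range; omega
  · have := block_lt hN hu hh; omega
  · have := block_lt hN hu' hh; omega
  · exact Or.inr ⟨hv, hw⟩

lemma hardGraph_colorable (hh : 1 ≤ h) (hd : 2 * h ≤ d) (hN : h * treeSize k + d ≤ N) :
    (hardGraph N d h k B).Colorable d := by
  obtain ⟨f, -, hf⟩ := exists_two_coloring k 0 B true
  -- the two classes of blocks use disjoint palettes of size `h`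
  let g : ℕ → ℕ := fun x =>
    if x / h < treeSize k then (if f (x / h) then 0 else h) + x % h else x - (N - d)
  have hg : ∀ x : Fin N, g x < d := by
    intro x
    have hm : (x : ℕ) % h < h := Nat.mod_lt _ hh
    have := x.2
    simp only [g]
    split_ifs <;> omega
  refine ⟨SimpleGraph.Coloring.mk (fun x => ⟨g x, hg x⟩) ?_⟩
  rintro x y ⟨hne, hadj⟩ heq
  have heq' : g x = g y := congrArg Fin.val heq
  rcases hadj with ⟨hx, hy, hadj⟩ | ⟨hx, hy⟩
  · simp only [g, if_pos hx, if_pos hy] at heq'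
    have hmx : (x : ℕ) % h < h := Nat.mod_lt _ hh
    have hmy : (y : ℕ) % h < h := Nat.mod_lt _ hh
    rcases hadj with hb | hp
    · rw [hb] at heq'
      have hm : (x : ℕ) % h = y % h := by omega
      refine hne (Fin.ext ?_)
      rw [← Nat.div_add_mod x h, ← Nat.div_add_mod y h, hb, hm]
    · have hfne : f (x / h) ≠ f (y / h) := by
        rcases hp with hp | hp
        exacts [hf _ _ hp, (hf _ _ hp).symm]
      cases hfx : f (x / h) <;> cases hfy : f (y / h) <;> simp_all
      omega
  · have hx' : ¬ (x / h : ℕ) < treeSize k := fun hb => by have := block_lt hN hb hh; omega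
    have hy' : ¬ (y / h : ℕ) < treeSize k := fun hb => by have := block_lt hN hb hh; omega
    simp only [g, if_neg hx', if_neg hy'] at heq'
    exact hne (Fin.ext (by omega))

lemma hardGraph_chromaticNumber (hh : 1 ≤ h) (hd : 2 * h ≤ d) (hN : h * treeSize k + d ≤ N) :
    (hardGraph N d h k B).chromaticNumber = d := by
  refine le_antisymm (hardGraph_colorable hh hd hN).chromaticNumber_le ?_
  let e : Fin d → Fin N := fun i => ⟨N - d + i, by omega⟩
  have he : Function.Injective e := fun i j hij => by
    have : N - d + (i : ℕ) = N - d + j := congrArg Fin.val hij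
    exact Fin.ext (by omega)
  have hc : (hardGraph N d h k B).IsClique (Finset.univ.image e : Finset (Fin N)) := by
    intro x hx y hy hne
    simp only [Finset.coe_image, Finset.coe_univ, Set.image_univ, Set.mem_range] at hx hy
    obtain ⟨i, rfl⟩ := hx
    obtain ⟨j, rfl⟩ := hy
    exact ⟨hne, Or.inr ⟨by simp only [e]; omega, by simp only [e]; omega⟩⟩
  have := hc.card_le_chromaticNumber
  rwa [Finset.card_image_of_injective _ he, Finset.card_univ, Fintype.card_fin] at this

/-- The average of the number of colours over all coin flips is at least `k * h / 2`. -/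
lemma hardGraph_colors (hh : 1 ≤ h) (hN : h * treeSize k + d ≤ N)
    {A : Fin N → SimpleGraph (Fin N) → ℕ} (hA : IsOnlineAlg A) :
    2 ^ treeSize k * (k * h) ≤
      2 * ∑ B ∈ (Finset.range (treeSize k)).powerset, colorsUsed A (hardGraph N d h k B) := by
  obtain ⟨hon, hprop⟩ := hA
  let col : Finset ℕ → ℕ → ℕ := fun B x =>
    if hx : x < N then A ⟨x, hx⟩ (hardGraph N d h k B) else 0
  let c : Finset ℕ → ℕ → Finset ℕ := fun B s =>
    (Finset.range h).image fun i => col B (s * h + i)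
  have hdiv : ∀ s i, i < h → (s * h + i) / h = s := fun s i hi => by
    rw [mul_comm, Nat.mul_add_div hh, Nat.div_eq_of_lt hi, add_zero]
  have hlt : ∀ s i, i < h → s < treeSize k → s * h + i < N := fun s i hi hs => by
    have := block_lt (x := s * h + i) hN (by rwa [hdiv s i hi]) hh
    omega
  have hcol : ∀ B x (hx : x < N), col B x = A ⟨x, hx⟩ (hardGraph N d h k B) :=
    fun B x hx => dif_pos hx
  have key := palette_bound (M := treeSize k) (h := h) c ?_ ?_ k 0 ?_ (by omega)
  · refine key.trans (Nat.mul_le_mul_left 2 (Finset.sum_le_sum fun B _ => ?_))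
    refine Finset.card_le_card fun z hz => ?_
    obtain ⟨s, hs, hz⟩ := Finset.mem_biUnion.1 hz
    obtain ⟨i, hi, rfl⟩ := Finset.mem_image.1 hz
    have hr := active_range hs
    have hx := hlt s i (Finset.mem_range.1 hi) (by omega)
    rw [hcol B _ hx]
    exact Finset.mem_image_of_mem (fun v => A v (hardGraph N d h k B)) (Finset.mem_univ _)
  · -- a block is a clique, so it receives `h` colours
    intro B t ht
    refine le_of_eq ?_
    rw [Finset.card_image_of_injOn, Finset.card_range]
    intro i hi j hj hij
    have hi := Finset.mem_range.1 hi
    have hj := Finset.mem_range.1 hj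
    by_contra hne
    beta_reduce at hij
    rw [hcol B _ (hlt t i hi ht), hcol B _ (hlt t j hj ht)] at hij
    refine hprop (hardGraph N d h k B) _ _ ⟨fun hf => hne ?_, Or.inl ⟨?_, ?_, Or.inl ?_⟩⟩ hij
    · have := congrArg Fin.val hf
      simp only at this
      omega
    · simpa only [hdiv t i hi] using ht
    · simpa only [hdiv t j hj] using ht
    · simp only [hdiv t i hi, hdiv t j hj]
  · -- the coin of `t` only affects edges into the block `t`, which arrives after the block `s`
    intro B s t hst
    refine Finset.image_congr fun i hi => ?_
    have hi := Finset.mem_range.1 hi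
    by_cases hx : s * h + i < N
    · simp only [hcol _ _ hx]
      refine hon _ _ _ fun u v hu hv => ?_
      have hu' : (u / h : ℕ) ≤ s := by
        have := Nat.div_le_div_right (c := h) (show (u : ℕ) ≤ s * h + i from hu)
        rwa [hdiv s i hi] at this
      have hv' : (v / h : ℕ) ≤ s := by
        have := Nat.div_le_div_right (c := h) (show (v : ℕ) ≤ s * h + i from hv)
        rwa [hdiv s i hi] at this
      have hpar : ∀ a b, b ≤ s → (Par k 0 (symmDiff B {t}) a b ↔ Par k 0 B a b) :=
        fun a b hb => par_congr fun j hj => mem_flip_of_ne (by omega)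
      simp only [hardGraph, hpar _ _ hu', hpar _ _ hv']
    · simp only [col, dif_neg hx]
  · -- a block is completely joined to its parent
    intro B s t hst
    have hr := hst.range
    rw [Finset.disjoint_left]
    intro z hz hz'
    obtain ⟨i, hi, rfl⟩ := Finset.mem_image.1 hz
    obtain ⟨j, hj, hij⟩ := Finset.mem_image.1 hz'
    have hi := Finset.mem_range.1 hi
    have hj := Finset.mem_range.1 hj
    have hs : s < treeSize k := by omega
    have ht : t < treeSize k := by omega
    rw [hcol B _ (hlt s i hi hs), hcol B _ (hlt t j hj ht)] at hij
    refine hprop (hardGraph N d h k B) _ _ ⟨fun hf => ?_, Or.inl ⟨?_, ?_, Or.inr (Or.inr ?_)⟩⟩ hij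
    · have h1 := congrArg (fun x : Fin N => (x : ℕ) / h) hf
      simp only [hdiv s i hi, hdiv t j hj] at h1
      omega
    · simpa only [hdiv t j hj] using ht
    · simpa only [hdiv s i hi] using hs
    · simpa only [hdiv s i hi, hdiv t j hj] using hst

end HardGraph

theorem rand_distribution_chordal (d k : ℕ) (hd : 2 ≤ d) (hk : 1 ≤ k) :
    ∃ 𝒢 : Multiset (SimpleGraph (Fin (d * 12 ^ k))),
      𝒢 ≠ 0 ∧
      (∀ G ∈ 𝒢, G.IsChordal ∧ G.chromaticNumber = d) ∧
      ∀ (A : Fin (d * 12 ^ k) → SimpleGraph (Fin (d * 12 ^ k)) → ℕ), IsOnlineAlg A →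
        ((d : ℝ) - 1) * k / 8 ≤
          (𝒢.map fun G => (colorsUsed A G : ℝ)).sum / (Multiset.card 𝒢 : ℝ) := by
  obtain ⟨h, hh, h2, h3⟩ : ∃ h, 1 ≤ h ∧ 2 * h ≤ d ∧ d ≤ 2 * h + 1 :=
    ⟨d / 2, by omega, by omega, by omega⟩
  have hN : h * treeSize k + d ≤ d * 12 ^ k := by
    calc h * treeSize k + d ≤ d * treeSize k + d := by gcongr; omega
      _ = d * 2 ^ k := by rw [← treeSize_add_one]; ring
      _ ≤ d * 12 ^ k := by gcongr; norm_num
  refine ⟨(Finset.range (treeSize k)).powerset.val.map (hardGraph (d * 12 ^ k) d h k), ?_, ?_, ?_⟩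
  · rw [Ne, Multiset.map_eq_zero, Finset.val_eq_zero]
    exact (Finset.powerset_nonempty _).ne_empty
  · intro G hG
    obtain ⟨B, -, rfl⟩ := Multiset.mem_map.1 hG
    exact ⟨hardGraph_isChordal hh hN, hardGraph_chromaticNumber hh h2 hN⟩
  · intro A hA
    have key := hardGraph_colors hh hN hA
    rw [Multiset.map_map, Multiset.card_map, Finset.card_val, Finset.card_powerset,
      Finset.card_range, le_div_iff₀ (by positivity)]
    have key' : (2 : ℝ) ^ treeSize k * (k * h) ≤
        2 * ∑ B ∈ (Finset.range (treeSize k)).powerset,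
          (colorsUsed A (hardGraph (d * 12 ^ k) d h k B) : ℝ) := by exact_mod_cast key
    have h3' : (d : ℝ) - 1 ≤ 2 * h := by
      rw [sub_le_iff_le_add]; exact_mod_cast h3
    have h4 : ((d : ℝ) - 1) * (k * 2 ^ treeSize k) ≤ 2 * h * (k * 2 ^ treeSize k) := by gcongr
    have h5 : (0 : ℝ) ≤ h * (k * 2 ^ treeSize k) := by positivity
    change _ ≤ ∑ B ∈ (Finset.range (treeSize k)).powerset,
      (colorsUsed A (hardGraph (d * 12 ^ k) d h k B) : ℝ)
    push_cast
    linarith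
end

section
/- There exists a constant α > 0 such that for every natural number n with n ≥ 48 and every randomized online coloring algorithm (ι, μ, (A i)) on n-vertex graphs, there exists a simple graph G on Fin n that is a tree (connected and acyclic) such that the expected number of colors used on G, namely ∑' i, (μ i)·(number of colors used by A i on G), is at least α·log n, where log is the base-2 logarithm. -/
/-- The graph joining each vertex `v` to its parent `par v`; `par v = v` means that `v` is a
root. -/
def parGraph {n : ℕ} (par : Fin n → Fin n) : SimpleGraph (Fin n) :=
  SimpleGraph.fromRel fun u v => par u = v

/-- The roots of the forest `par` among the vertices `s, …, e - 1`. -/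
def rootsIn {n : ℕ} (par : Fin n → Fin n) (s e : ℕ) : Finset (Fin n) :=
  Finset.univ.filter fun v => s ≤ v.val ∧ v.val < e ∧ par v = v

/-- The expectation of `X` under `μ`, used for bounded `X` only, so that the series converges. -/
noncomputable def pmfExp {ι : Type} (μ : PMF ι) (X : ι → ℕ) : ℝ :=
  ∑' i, (μ i).toReal * (X i : ℝ)

/-- The number of vertices of a bouquet of level `t`, that is `(3 ^ t - 1) / 2`. -/
def blockSize : ℕ → ℕ
  | 0 => 0
  | t + 1 => 3 * blockSize t + 1

theorem blockSize_lt (t : ℕ) : blockSize t + 1 ≤ 3 ^ t := by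
  induction t with
  | zero => simp [blockSize]
  | succ t ih => rw [blockSize, pow_succ]; omega

theorem pmf_summable_toReal {ι : Type} (μ : PMF ι) : Summable fun i => (μ i).toReal :=
  ENNReal.summable_toReal μ.tsum_coe_ne_top

theorem pmf_tsum_toReal {ι : Type} (μ : PMF ι) : ∑' i, (μ i).toReal = 1 := by
  rw [← ENNReal.tsum_toReal_eq (fun i => μ.apply_ne_top i), μ.tsum_coe, ENNReal.toReal_one]

theorem pmfExp_summable {ι : Type} (μ : PMF ι) (X : ι → ℕ) (n : ℕ) (h : ∀ i, X i ≤ n) :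
    Summable fun i => (μ i).toReal * (X i : ℝ) := by
  refine Summable.of_nonneg_of_le (fun i => by positivity) (fun i => ?_)
    ((pmf_summable_toReal μ).mul_right (n : ℝ))
  have : (X i : ℝ) ≤ n := by exact_mod_cast h i
  gcongr

theorem pmfExp_mono {ι : Type} (μ : PMF ι) (X Y : ι → ℕ) (n : ℕ) (hY : ∀ i, Y i ≤ n)
    (h : ∀ i, X i ≤ Y i) : pmfExp μ X ≤ pmfExp μ Y := by
  refine Summable.tsum_le_tsum (fun i => ?_)
    (pmfExp_summable μ X n fun i => (h i).trans (hY i)) (pmfExp_summable μ Y n hY)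
  have : (X i : ℝ) ≤ Y i := by exact_mod_cast h i
  gcongr

/-- The expectation form of the pointwise gain of one color in three outcomes. -/
theorem pmfExp_three {ι : Type} (μ : PMF ι) (X₁ X₂ X₃ Y₁ Y₂ Y₃ : ι → ℕ) (n : ℕ)
    (hX₁ : ∀ i, X₁ i ≤ n) (hX₂ : ∀ i, X₂ i ≤ n) (hX₃ : ∀ i, X₃ i ≤ n)
    (hY₁ : ∀ i, Y₁ i ≤ n) (hY₂ : ∀ i, Y₂ i ≤ n) (hY₃ : ∀ i, Y₃ i ≤ n)
    (h : ∀ i, X₁ i + X₂ i + X₃ i + 1 ≤ Y₁ i + Y₂ i + Y₃ i) :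
    pmfExp μ X₁ + pmfExp μ X₂ + pmfExp μ X₃ + 1 ≤ pmfExp μ Y₁ + pmfExp μ Y₂ + pmfExp μ Y₃ := by
  have sX₁ := pmfExp_summable μ X₁ n hX₁
  have sX₂ := pmfExp_summable μ X₂ n hX₂
  have sX₃ := pmfExp_summable μ X₃ n hX₃
  have sY₁ := pmfExp_summable μ Y₁ n hY₁
  have sY₂ := pmfExp_summable μ Y₂ n hY₂
  have sY₃ := pmfExp_summable μ Y₃ n hY₃
  have s1 := pmf_summable_toReal μ
  unfold pmfExp
  rw [← pmf_tsum_toReal μ, ← sX₁.tsum_add sX₂, ← (sX₁.add sX₂).tsum_add sX₃,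
    ← ((sX₁.add sX₂).add sX₃).tsum_add s1, ← sY₁.tsum_add sY₂, ← (sY₁.add sY₂).tsum_add sY₃]
  refine Summable.tsum_le_tsum (fun i => ?_) (((sX₁.add sX₂).add sX₃).add s1)
    ((sY₁.add sY₂).add sY₃)
  have h' : (X₁ i : ℝ) + X₂ i + X₃ i + 1 ≤ Y₁ i + Y₂ i + Y₃ i := by exact_mod_cast h i
  have := mul_le_mul_of_nonneg_left h' (ENNReal.toReal_nonneg (a := μ i))
  linarith

/-- The inequality of `card_add_card_add_card_lt` for one color, where `pᵢ` says that the color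
lies in the `i`-th set and `qᵢ` that it is the `i`-th new color. -/
theorem color_count {p₁ p₂ p₃ q₁ q₂ q₃ : Prop} [Decidable p₁] [Decidable p₂] [Decidable p₃]
    [Decidable q₁] [Decidable q₂] [Decidable q₃]
    (h₁ : q₁ → ¬p₁) (h₂ : q₂ → ¬p₂) (h₃ : q₃ → ¬p₃) :
    3 * ((if p₁ then 1 else 0) + (if p₂ then 1 else 0) + (if p₃ then 1 else 0))
        + ((if q₁ then 1 else 0) + (if q₂ then 1 else 0) + (if q₃ then 1 else 0)) ≤
      3 * ((if q₁ ∨ p₂ ∨ p₃ then 1 else 0) + (if q₂ ∨ p₁ ∨ p₃ then 1 else 0)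
        + (if q₃ ∨ p₁ ∨ p₂ then 1 else 0)) := by
  by_cases p₁ <;> by_cases p₂ <;> by_cases p₃ <;>
    by_cases q₁ <;> by_cases q₂ <;> by_cases q₃ <;> simp_all

/-- The combinatorial core: replacing one of three color sets by a single color outside it, in each
of the three possible ways, yields in total more colors than the three sets have. -/
theorem card_add_card_add_card_lt (C₁ C₂ C₃ : Finset ℕ) (a₁ a₂ a₃ : ℕ)
    (h₁ : a₁ ∉ C₁) (h₂ : a₂ ∉ C₂) (h₃ : a₃ ∉ C₃) :
    C₁.card + C₂.card + C₃.card + 1 ≤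
      (insert a₁ (C₂ ∪ C₃)).card + (insert a₂ (C₁ ∪ C₃)).card + (insert a₃ (C₁ ∪ C₂)).card := by
  set U : Finset ℕ := insert a₁ (insert a₂ (insert a₃ (C₁ ∪ C₂ ∪ C₃))) with hU
  have key : ∀ S : Finset ℕ, S ⊆ U → S.card = ∑ c ∈ U, if c ∈ S then 1 else 0 := by
    intro S hS
    rw [Finset.sum_ite_mem, Finset.inter_eq_right.2 hS, Finset.card_eq_sum_ones]
  have e₁ : (1 : ℕ) = ∑ c ∈ U, if c = a₁ then 1 else 0 := by simp [hU]
  have e₂ : (1 : ℕ) = ∑ c ∈ U, if c = a₂ then 1 else 0 := by simp [hU]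
  have e₃ : (1 : ℕ) = ∑ c ∈ U, if c = a₃ then 1 else 0 := by simp [hU]
  -- Each color `c` satisfies the inequality with `1` replaced by a third of the number of `i`
  -- with `aᵢ = c`; the factor `3` clears the denominator.
  suffices 3 * (C₁.card + C₂.card + C₃.card) + (1 + 1 + 1) ≤
      3 * ((insert a₁ (C₂ ∪ C₃)).card + (insert a₂ (C₁ ∪ C₃)).card
        + (insert a₃ (C₁ ∪ C₂)).card) by omega
  have s₁ := key C₁ (by grind)
  have s₂ := key C₂ (by grind)
  have s₃ := key C₃ (by grind)
  have s₄ := key (insert a₁ (C₂ ∪ C₃)) (by grind)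
  have s₅ := key (insert a₂ (C₁ ∪ C₃)) (by grind)
  have s₆ := key (insert a₃ (C₁ ∪ C₂)) (by grind)
  clear_value U
  have hpt : ∑ c ∈ U, (3 * ((if c ∈ C₁ then 1 else 0) + (if c ∈ C₂ then 1 else 0)
        + (if c ∈ C₃ then 1 else 0)) + ((if c = a₁ then 1 else 0) + (if c = a₂ then 1 else 0)
        + (if c = a₃ then 1 else 0))) ≤
      ∑ c ∈ U, 3 * ((if c ∈ insert a₁ (C₂ ∪ C₃) then 1 else 0)
        + (if c ∈ insert a₂ (C₁ ∪ C₃) then 1 else 0)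
        + (if c ∈ insert a₃ (C₁ ∪ C₂) then 1 else 0)) := by
    refine Finset.sum_le_sum fun c _ => ?_
    have g₁ : c = a₁ → c ∉ C₁ := fun h => h ▸ h₁
    have g₂ : c = a₂ → c ∉ C₂ := fun h => h ▸ h₂
    have g₃ : c = a₃ → c ∉ C₃ := fun h => h ▸ h₃
    simp only [Finset.mem_insert, Finset.mem_union]
    exact color_count g₁ g₂ g₃
  simp only [Finset.sum_add_distrib, ← Finset.mul_sum] at hpt
  rw [← s₁, ← s₂, ← s₃, ← s₄, ← s₅, ← s₆, ← e₁, ← e₂, ← e₃] at hpt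
  exact hpt

theorem parGraph_adj {n : ℕ} (par : Fin n → Fin n) (u v : Fin n) :
    (parGraph par).Adj u v ↔ u ≠ v ∧ (par u = v ∨ par v = u) := by
  simp [parGraph]

/-- Forests with the same parent relation among the vertices below `e` receive the same colors
there. -/
theorem color_congr {n : ℕ} {A : Fin n → SimpleGraph (Fin n) → ℕ} (hA : IsOnlineAlg A)
    (p q : Fin n → Fin n) (e : ℕ)
    (h : ∀ u v : Fin n, u.val < e → v.val < e → u ≠ v → (p u = v ↔ q u = v))
    (v : Fin n) (hv : v.val < e) : A v (parGraph p) = A v (parGraph q) := by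
  refine hA.1 v _ _ fun x y hx hy => ?_
  have hx' : x.val < e := lt_of_le_of_lt hx hv
  have hy' : y.val < e := lt_of_le_of_lt hy hv
  rw [parGraph_adj, parGraph_adj]
  refine and_congr_right fun hne => ?_
  rw [h x y hx' hy' hne, h y x hy' hx' hne.symm]

theorem image_rootsIn_congr {n : ℕ} {A : Fin n → SimpleGraph (Fin n) → ℕ} (hA : IsOnlineAlg A)
    (p q : Fin n → Fin n) (s e : ℕ) (h : ∀ u : Fin n, u.val < e → p u = q u) :
    (rootsIn p s e).image (fun v => A v (parGraph p)) =
      (rootsIn q s e).image (fun v => A v (parGraph q)) := by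
  have hR : rootsIn p s e = rootsIn q s e := by
    ext v
    simp only [rootsIn, Finset.mem_filter, Finset.mem_univ, true_and]
    constructor <;> rintro ⟨h1, h2, h3⟩ <;> refine ⟨h1, h2, ?_⟩ <;> simp_all
  rw [hR]
  refine Finset.image_congr fun v hv => ?_
  simp only [rootsIn, Finset.coe_filter, Finset.mem_univ, true_and, Set.mem_ofPred_eq] at hv
  exact color_congr hA p q e (fun u w hu _ _ => by rw [h u hu]) v hv.2.1

/-- Make `a` the parent of all vertices in `R`, and a root. -/
def joinAt {n : ℕ} (p : Fin n → Fin n) (R : Finset (Fin n)) (a : Fin n) : Fin n → Fin n :=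
  fun v => if v ∈ R then a else if v = a then a else p v

/-- The root colors after joining the roots `R` below `a`: those of the untouched roots `Q`, and
one color not occurring on `R`. -/
theorem exists_color_joinAt {n : ℕ} {A : Fin n → SimpleGraph (Fin n) → ℕ} (hA : IsOnlineAlg A)
    (p : Fin n → Fin n) (R Q : Finset (Fin n)) (a : Fin n) (s : ℕ) (hs : s ≤ a.val)
    (hR : ∀ v ∈ R, v < a ∧ p v = v)
    (hQ : ∀ v ∈ Q, s ≤ v.val ∧ v < a ∧ p v = v ∧ v ∉ R) :
    ∃ x, x ∉ R.image (fun v => A v (parGraph p)) ∧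
      insert x (Q.image (fun v => A v (parGraph p))) ⊆
        (rootsIn (joinAt p R a) s (a.val + 1)).image
          (fun v => A v (parGraph (joinAt p R a))) := by
  have hc : ∀ v : Fin n, v < a → A v (parGraph (joinAt p R a)) = A v (parGraph p) := by
    intro v hv
    refine color_congr hA _ _ a.val (fun u w hu hw hne => ?_) v hv
    have hua : u ≠ a := fun h => by simp [h] at hu
    have hwa : a ≠ w := fun h => by simp [← h] at hw
    unfold joinAt
    by_cases huR : u ∈ R
    · simp [huR, hwa, (hR u huR).2, hne]
    · simp [huR, hua]
  have haR : a ∉ R := fun h => lt_irrefl _ (hR a h).1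
  refine ⟨A a (parGraph (joinAt p R a)), ?_, ?_⟩
  · simp only [Finset.mem_image, not_exists, not_and]
    intro v hv heq
    rw [← hc v (hR v hv).1] at heq
    refine hA.2 _ v a ?_ heq
    rw [parGraph_adj]
    exact ⟨(hR v hv).1.ne, Or.inl (by simp [joinAt, hv])⟩
  · intro x hx
    rw [Finset.mem_insert] at hx
    rcases hx with rfl | hx
    · refine Finset.mem_image_of_mem (fun v => A v (parGraph (joinAt p R a))) ?_
      simp [rootsIn, joinAt, hs]
    · obtain ⟨v, hv, rfl⟩ := Finset.mem_image.1 hx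
      obtain ⟨h1, h2, h3, h4⟩ := hQ v hv
      refine Finset.mem_image.2 ⟨v, ?_, hc v h2⟩
      have : v.val < a.val := h2
      simp only [rootsIn, Finset.mem_filter, Finset.mem_univ, true_and]
      refine ⟨h1, by omega, ?_⟩
      simp [joinAt, h4, h2.ne, h3]

/-- The expected number of colors on the roots among the vertices `s, …, e - 1`. -/
noncomputable def rootExp {n : ℕ} {ι : Type} (μ : PMF ι)
    (A : ι → Fin n → SimpleGraph (Fin n) → ℕ) (par : Fin n → Fin n) (s e : ℕ) : ℝ :=
  pmfExp μ fun i => ((rootsIn par s e).image fun v => A i v (parGraph par)).card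

theorem card_image_le_n {n : ℕ} (R : Finset (Fin n)) (f : Fin n → ℕ) : (R.image f).card ≤ n :=
  Finset.card_image_le.trans ((Finset.card_le_univ R).trans (by simp))

theorem exists_bouquet {n : ℕ} {ι : Type} (μ : PMF ι)
    (A : ι → Fin n → SimpleGraph (Fin n) → ℕ) (hA : ∀ i, IsOnlineAlg (A i)) (t : ℕ) :
    ∀ (s : ℕ) (par : Fin n → Fin n), s + blockSize t ≤ n → (∀ v, v ≤ par v) →
      ∃ par' : Fin n → Fin n, (∀ v, v ≤ par' v) ∧ (∀ v : Fin n, v.val < s → par' v = par v) ∧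
        (t : ℝ) / 3 ≤ rootExp μ A par' s (s + blockSize t) := by
  induction t with
  | zero =>
    intro s par _ hp
    refine ⟨par, hp, fun _ _ => rfl, ?_⟩
    simp only [Nat.cast_zero, zero_div]
    exact tsum_nonneg fun i => by positivity
  | succ t ih =>
    intro s par hsn hp
    rw [blockSize] at hsn ⊢
    set b := blockSize t with hb
    obtain ⟨p₁, hp₁, hag₁, he₁⟩ := ih s par (by omega) hp
    obtain ⟨p₂, hp₂, hag₂, he₂⟩ := ih (s + b) p₁ (by omega) hp₁
    obtain ⟨p₃, hp₃, hag₃, he₃⟩ := ih (s + b + b) p₂ (by omega) hp₂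
    have he₁' : (t : ℝ) / 3 ≤ rootExp μ A p₃ s (s + b) := by
      refine he₁.trans_eq ?_
      unfold rootExp
      congr 1; funext i; congr 1
      refine image_rootsIn_congr (hA i) _ _ _ _ fun u hu => ?_
      rw [hag₃ u (by omega), hag₂ u hu]
    have he₂' : (t : ℝ) / 3 ≤ rootExp μ A p₃ (s + b) (s + b + b) := by
      refine he₂.trans_eq ?_
      unfold rootExp
      congr 1; funext i; congr 1
      refine image_rootsIn_congr (hA i) _ _ _ _ fun u hu => ?_
      rw [hag₃ u hu]
    set a : Fin n := ⟨s + (3 * b), by omega⟩ with ha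
    set R₁ := rootsIn p₃ s (s + b) with hR₁
    set R₂ := rootsIn p₃ (s + b) (s + b + b) with hR₂
    set R₃ := rootsIn p₃ (s + b + b) (s + b + b + b) with hR₃
    have m₁ : ∀ v ∈ R₁, s ≤ v.val ∧ v.val < s + b ∧ p₃ v = v := by
      intro v hv; simpa [hR₁, rootsIn] using hv
    have m₂ : ∀ v ∈ R₂, s + b ≤ v.val ∧ v.val < s + b + b ∧ p₃ v = v := by
      intro v hv; simpa [hR₂, rootsIn] using hv
    have m₃ : ∀ v ∈ R₃, s + b + b ≤ v.val ∧ v.val < s + b + b + b ∧ p₃ v = v := by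
      intro v hv; simpa [hR₃, rootsIn] using hv
    have lta : ∀ v : Fin n, v.val < s + b + b + b → v < a := by
      intro v hv; rw [Fin.lt_def, ha]; simp only; omega
    have mem : ∀ v, v ∈ R₁ ∨ v ∈ R₂ ∨ v ∈ R₃ → s ≤ v.val ∧ v < a ∧ p₃ v = v := by
      rintro v (hv | hv | hv)
      · have := m₁ v hv; exact ⟨by omega, lta v (by omega), this.2.2⟩
      · have := m₂ v hv; exact ⟨by omega, lta v (by omega), this.2.2⟩
      · have := m₃ v hv; exact ⟨by omega, lta v (by omega), this.2.2⟩
    have d₁₂ : ∀ v, v ∈ R₁ → v ∉ R₂ := fun v h h' => by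
      have := m₁ v h; have := m₂ v h'; omega
    have d₁₃ : ∀ v, v ∈ R₁ → v ∉ R₃ := fun v h h' => by
      have := m₁ v h; have := m₃ v h'; omega
    have d₂₃ : ∀ v, v ∈ R₂ → v ∉ R₃ := fun v h h' => by
      have := m₂ v h; have := m₃ v h'; omega
    -- One of the three choices is as good as their average.
    suffices hex : ∃ R : Finset (Fin n), (∀ v ∈ R, s ≤ v.val ∧ v < a ∧ p₃ v = v) ∧
        ((t + 1 : ℕ) : ℝ) / 3 ≤ rootExp μ A (joinAt p₃ R a) s (s + (3 * b + 1)) by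
      obtain ⟨R, hR, hle⟩ := hex
      refine ⟨joinAt p₃ R a, fun v => ?_, fun v hv => ?_, hle⟩
      · unfold joinAt
        split_ifs with h1 h2
        · exact (hR v h1).2.1.le
        · exact h2.le
        · exact hp₃ v
      · have h1 : v ∉ R := fun h => by have := hR v h; omega
        have h2 : v ≠ a := fun h => by rw [h, ha] at hv; simp at hv
        simp only [joinAt, h1, h2, if_false]
        rw [hag₃ v (by omega), hag₂ v (by omega), hag₁ v hv]
    have hsum : rootExp μ A p₃ s (s + b) + rootExp μ A p₃ (s + b) (s + b + b)
          + rootExp μ A p₃ (s + b + b) (s + b + b + b) + 1 ≤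
        rootExp μ A (joinAt p₃ R₁ a) s (s + (3 * b + 1))
          + rootExp μ A (joinAt p₃ R₂ a) s (s + (3 * b + 1))
          + rootExp μ A (joinAt p₃ R₃ a) s (s + (3 * b + 1)) := by
      refine pmfExp_three μ _ _ _ _ _ _ n (fun i => card_image_le_n _ _)
        (fun i => card_image_le_n _ _) (fun i => card_image_le_n _ _)
        (fun i => card_image_le_n _ _) (fun i => card_image_le_n _ _)
        (fun i => card_image_le_n _ _) fun i => ?_
      have hsa : s ≤ a.val := by rw [ha]; simp
      obtain ⟨x₁, hx₁, hs₁⟩ := exists_color_joinAt (hA i) p₃ R₁ (R₂ ∪ R₃) a s hsa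
        (fun v hv => (mem v (by tauto)).2) (fun v hv => by
          have hv' := Finset.mem_union.1 hv
          have := mem v (by tauto)
          exact ⟨this.1, this.2.1, this.2.2, by have := d₁₂ v; have := d₁₃ v; tauto⟩)
      obtain ⟨x₂, hx₂, hs₂⟩ := exists_color_joinAt (hA i) p₃ R₂ (R₁ ∪ R₃) a s hsa
        (fun v hv => (mem v (by tauto)).2) (fun v hv => by
          have hv' := Finset.mem_union.1 hv
          have := mem v (by tauto)
          exact ⟨this.1, this.2.1, this.2.2, by have := d₁₂ v; have := d₂₃ v; tauto⟩)
      obtain ⟨x₃, hx₃, hs₃⟩ := exists_color_joinAt (hA i) p₃ R₃ (R₁ ∪ R₂) a s hsa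
        (fun v hv => (mem v (by tauto)).2) (fun v hv => by
          have hv' := Finset.mem_union.1 hv
          have := mem v (by tauto)
          exact ⟨this.1, this.2.1, this.2.2, by have := d₁₃ v; have := d₂₃ v; tauto⟩)
      rw [Finset.image_union] at hs₁ hs₂ hs₃
      have hav : a.val + 1 = s + (3 * b + 1) := by rw [ha]; rfl
      rw [hav] at hs₁ hs₂ hs₃
      refine (card_add_card_add_card_lt _ _ _ x₁ x₂ x₃ hx₁ hx₂ hx₃).trans ?_
      exact add_le_add (add_le_add (Finset.card_le_card hs₁) (Finset.card_le_card hs₂))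
        (Finset.card_le_card hs₃)
    by_contra hcon
    push Not at hcon
    have c₁ := hcon R₁ fun v hv => mem v (by tauto)
    have c₂ := hcon R₂ fun v hv => mem v (by tauto)
    have c₃ := hcon R₃ fun v hv => mem v (by tauto)
    push_cast at c₁ c₂ c₃
    linarith

/-- If every vertex except the last has a later parent, the graph is a tree: following parents
leads to the last vertex, and there are at most `n - 1` edges. -/
theorem parGraph_isTree {m : ℕ} (par : Fin (m + 1) → Fin (m + 1))
    (h : ∀ v, v ≠ Fin.last m → v < par v) (hl : par (Fin.last m) = Fin.last m) :
    (parGraph par).IsTree := by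
  have hreach : ∀ (k : ℕ) (v : Fin (m + 1)), m - v.val ≤ k →
      (parGraph par).Reachable v (Fin.last m) := by
    intro k
    induction k with
    | zero =>
      intro v hv
      have : v = Fin.last m := by ext; simp; omega
      rw [this]
    | succ k ih =>
      intro v hv
      by_cases hvl : v = Fin.last m
      · rw [hvl]
      · have hlt := h v hvl
        have hadj : (parGraph par).Adj v (par v) := by
          rw [parGraph_adj]; exact ⟨hlt.ne, Or.inl rfl⟩
        refine hadj.reachable.trans (ih _ ?_)
        have := Fin.lt_def.1 hlt
        omega
  have hconn : (parGraph par).Connected :=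
    { preconnected := fun u v => (hreach _ u le_rfl).trans (hreach _ v le_rfl).symm
      nonempty := ⟨Fin.last m⟩ }
  rw [SimpleGraph.isTree_iff_connected_and_card]
  refine ⟨hconn, le_antisymm ?_ hconn.card_vert_le_card_edgeSet_add_one⟩
  have hsub : (parGraph par).edgeSet ⊆
      (((Finset.univ.erase (Fin.last m)).image fun v => s(v, par v) :
        Finset (Sym2 (Fin (m + 1)))) : Set (Sym2 (Fin (m + 1)))) := by
    intro e
    induction e using Sym2.ind with
    | _ u v =>
      intro he
      rw [SimpleGraph.mem_edgeSet, parGraph_adj] at he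
      simp only [Finset.coe_image, Set.mem_image, Finset.mem_coe, Finset.mem_erase,
        Finset.mem_univ, and_true]
      obtain ⟨hne, he | he⟩ := he
      · exact ⟨u, fun hu => hne (by rw [← he, hu, hl]), by rw [he]⟩
      · exact ⟨v, fun hv => hne (by rw [← he, hv, hl]), by rw [he, Sym2.eq_swap]⟩
  have h1 : Nat.card (parGraph par).edgeSet ≤ m := by
    rw [Nat.card_coe_set_eq]
    refine (Set.ncard_le_ncard hsub (Finset.finite_toSet _)).trans ?_
    rw [Set.ncard_coe_finset]
    refine Finset.card_image_le.trans ?_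
    simp
  simpa using h1

theorem rand_lower_bound_trees :
    ∃ α : ℝ, 0 < α ∧
      ∀ (n : ℕ), 48 ≤ n →
        ∀ (ι : Type) [Countable ι] (μ : PMF ι)
          (A : ι → Fin n → SimpleGraph (Fin n) → ℕ),
          (∀ i, IsOnlineAlg (A i)) →
          ∃ G : SimpleGraph (Fin n), G.Connected ∧ G.IsAcyclic ∧
            α * Real.logb 2 n ≤ ∑' i, (μ i).toReal * (colorsUsed (A i) G : ℝ) := by
  refine ⟨1 / 12, by norm_num, fun n hn ι _ μ A hA => ?_⟩
  set t := Nat.log 3 n with ht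
  have hn0 : n ≠ 0 := by omega
  have hlow : 3 ^ t ≤ n := Nat.pow_log_le_self 3 hn0
  have hup : n < 3 ^ (t + 1) := Nat.lt_pow_succ_log_self (by norm_num) n
  have ht1 : 1 ≤ t := Nat.log_pos (by norm_num) (by omega)
  have hb := blockSize_lt t
  obtain ⟨m, rfl⟩ : ∃ m, n = m + 1 := ⟨n - 1, by omega⟩
  obtain ⟨p, hp, -, he⟩ := exists_bouquet μ A hA t 0 id (by omega) fun v => le_rfl
  rw [zero_add] at he
  set q : Fin (m + 1) → Fin (m + 1) := fun v => if p v = v then Fin.last m else p v with hq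
  have htree : (parGraph q).IsTree := by
    refine parGraph_isTree q (fun v hv => ?_) ?_
    · simp only [hq]
      split_ifs with h1
      · exact Fin.lt_last_iff_ne_last.2 hv
      · exact lt_of_le_of_ne (hp v) (Ne.symm h1)
    · have : p (Fin.last m) = Fin.last m := le_antisymm (Fin.le_last _) (hp _)
      simp [hq, this]
  refine ⟨parGraph q, htree.1, htree.2, ?_⟩
  have hcol : rootExp μ A p 0 (blockSize t) ≤ pmfExp μ fun i => colorsUsed (A i) (parGraph q) := by
    refine pmfExp_mono μ _ _ (m + 1) (fun i => card_image_le_n _ _) fun i => ?_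
    refine Finset.card_le_card fun x hx => ?_
    obtain ⟨v, hv, rfl⟩ := Finset.mem_image.1 hx
    simp only [rootsIn, Finset.mem_filter, Finset.mem_univ, true_and] at hv
    refine Finset.mem_image.2 ⟨v, Finset.mem_univ _, ?_⟩
    refine color_congr (hA i) _ _ (blockSize t) (fun u w hu hw hne => ?_) v hv.2.1
    simp only [hq]
    split_ifs with h1
    · have hwl : Fin.last m ≠ w := fun h => by
        rw [← h, Fin.val_last] at hw; omega
      simp [h1, hwl, hne]
    · rfl
  refine le_trans ?_ (he.trans hcol)
  -- `n < 3 ^ (t + 1) ≤ 4 ^ (2 t) = 2 ^ (4 t)`, so `logb 2 n ≤ 4 t`.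
  have hpow : ((m + 1 : ℕ) : ℝ) ≤ (2 : ℝ) ^ ((4 * t : ℕ) : ℝ) := by
    rw [Real.rpow_natCast]
    have h2 : m + 1 ≤ 2 ^ (4 * t) := by
      calc m + 1 ≤ 3 ^ (t + 1) := hup.le
        _ ≤ 4 ^ (t + 1) := Nat.pow_le_pow_left (by norm_num) _
        _ ≤ 4 ^ (2 * t) := Nat.pow_le_pow_right (by norm_num) (by omega)
        _ = 2 ^ (4 * t) := by
          rw [show 4 * t = 2 * (2 * t) by ring, pow_mul 2 2]; norm_num
    exact_mod_cast h2
  have hlog : Real.logb 2 ((m + 1 : ℕ) : ℝ) ≤ ((4 * t : ℕ) : ℝ) :=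
    (Real.logb_le_iff_le_rpow (by norm_num) (by positivity)).2 hpow
  push_cast at hlog ⊢
  linarith
end
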